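/- arXiv:1606.08818 — 2 statements merged into one kernel-verified Lean document; each statement's English description precedes it below -/
import Mathlib

section
/- Let c ∈ [nπ/2, (n+1)π/2), let I ⊂ ℝ be an open interval and D ⊂ ℝⁿ a bounded domain. If v, w ∈ ℱ_c(I × D), then (v + w)/2 ∈ ℱ_c(I × D). -/
open Real Filter Matrix

noncomputable section

/-- The Hessian matrix of a function `v : ℝ^m → ℝ` at `x`. -/
def hessianMatrix {m : ℕ} (v : (Fin m → ℝ) → ℝ) (x : Fin m → ℝ) :
    Matrix (Fin m) (Fin m) ℝ :=
  Matrix.of fun i j => iteratedFDeriv ℝ 2 v x ![Pi.single i 1, Pi.single j 1]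

/-- The lifted Lagrangian angle θ̃(A) = ∑ arctan λ_j(A) of a real symmetric matrix. -/
def liftedAngle {m : ℕ} (A : Matrix (Fin m) (Fin m) ℝ) : ℝ :=
  if h : A.IsHermitian then ∑ j, Real.arctan (h.eigenvalues j) else 0

/-- The Harvey–Lawson branches `F_c` of the special Lagrangian subequation. -/
def Fc (m : ℕ) (c : ℝ) : Set (Matrix (Fin m) (Fin m) ℝ) :=
  {A | A.IsSymm ∧ c ≤ liftedAngle A}

/-- `I_n = diag(0,1,…,1)` as a complex `(n+1)×(n+1)` matrix. -/
def Inmat (n : ℕ) : Matrix (Fin (n+1)) (Fin (n+1)) ℂ :=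
  Matrix.diagonal fun i => if i = 0 then 0 else 1

/-- The complex matrix `I_n + i A`. -/
def cmat {n : ℕ} (A : Matrix (Fin (n+1)) (Fin (n+1)) ℝ) :
    Matrix (Fin (n+1)) (Fin (n+1)) ℂ :=
  Inmat n + Complex.I • A.map (fun a => (a : ℂ))

open Classical in
/-- The lifted space-time Lagrangian angle Θ̃, summing `Complex.arg` (with values in
`(-π, π]`) over the roots (with multiplicity) of the characteristic polynomial of
`I_n + i A`, shifted by `π/2` over the singular set `S = {det (I_n + iA) = 0}` where only
the nonzero roots are counted. -/
def spaceTimeAngle {n : ℕ} (A : Matrix (Fin (n+1)) (Fin (n+1)) ℝ) : ℝ :=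
  if (cmat A).det = 0 then
    π / 2 + ((((cmat A).charpoly.roots).filter (fun z => z ≠ 0)).map Complex.arg).sum
  else (((cmat A).charpoly.roots).map Complex.arg).sum

/-- The degenerate special Lagrangian subequation `ℱ_c ⊂ Sym(ℝ^{n+1})`. -/
def calF (n : ℕ) (c : ℝ) : Set (Matrix (Fin (n+1)) (Fin (n+1)) ℝ) :=
  {A | A.IsSymm ∧ c ≤ spaceTimeAngle A}

/-- Interior of a set of symmetric matrices, relative to the symmetric matrices. -/
def symInterior {m : ℕ} (F : Set (Matrix (Fin m) (Fin m) ℝ)) :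
    Set (Matrix (Fin m) (Fin m) ℝ) :=
  {A | A.IsSymm ∧ ∀ᶠ B in nhds A, B.IsSymm → B ∈ F}

/-- The dual subequation `F̃ = (−Int F)ᶜ` (within the symmetric matrices). -/
def dualSub {m : ℕ} (F : Set (Matrix (Fin m) (Fin m) ℝ)) :
    Set (Matrix (Fin m) (Fin m) ℝ) :=
  {A | A.IsSymm ∧ -A ∉ symInterior F}

/-- An `EReal`-valued (i.e. `[−∞,∞)`-valued) function is subaffine on `U` if, for every
affine function `a` and compact `K ⊆ U`, `u ≤ a` on `∂K` implies `u ≤ a` on `K`. -/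
def IsSubaffine {m : ℕ} (U : Set (Fin m → ℝ)) (u : (Fin m → ℝ) → EReal) : Prop :=
  ∀ (a : (Fin m → ℝ) →ᵃ[ℝ] ℝ) (K : Set (Fin m → ℝ)), IsCompact K → K ⊆ U →
    (∀ x ∈ frontier K, u x ≤ (a x : EReal)) → ∀ x ∈ K, u x ≤ (a x : EReal)

/-- `u` is of type `F` on `U` (i.e. `u ∈ F(U)`): `u` is `[−∞,∞)`-valued, upper
semicontinuous on `U`, and `u + v` is subaffine on `U` for every `C²` function `v`
whose Hessian lies in the dual subequation `F̃` at every point of `U`. -/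
def IsTypeF {m : ℕ} (F : Set (Matrix (Fin m) (Fin m) ℝ)) (U : Set (Fin m → ℝ))
    (u : (Fin m → ℝ) → EReal) : Prop :=
  (∀ x ∈ U, u x ≠ ⊤) ∧ UpperSemicontinuousOn u U ∧
    ∀ v : (Fin m → ℝ) → ℝ, ContDiffOn ℝ 2 v U →
      (∀ x ∈ U, hessianMatrix v x ∈ dualSub F) →
      IsSubaffine U (fun x => u x + ((v x : ℝ) : EReal))

/-- The lower-right `n×n` block `A⁺` of an `(n+1)×(n+1)` matrix. -/
def Aplus {n : ℕ} (A : Matrix (Fin (n+1)) (Fin (n+1)) ℝ) : Matrix (Fin n) (Fin n) ℝ :=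
  Matrix.of fun i j => A i.succ j.succ

end

/-! ### Calculus lemmas -/

lemma aux_contDiffAt_fderiv {m : ℕ} {f : (Fin m → ℝ) → ℝ} {x : Fin m → ℝ}
    (hf : ContDiffAt ℝ 2 f x) : ContDiffAt ℝ 1 (fderiv ℝ f) x :=
  hf.fderiv_right (m := 1) (by norm_num)

lemma hess_apply {m : ℕ} (f : (Fin m → ℝ) → ℝ) (x : Fin m → ℝ) (i j : Fin m) :
    hessianMatrix f x i j = fderiv ℝ (fderiv ℝ f) x (Pi.single i 1) (Pi.single j 1) := by
  simp [hessianMatrix, iteratedFDeriv_two_apply]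

lemma hess_add {m : ℕ} {f g : (Fin m → ℝ) → ℝ} {x : Fin m → ℝ}
    (hf : ContDiffAt ℝ 2 f x) (hg : ContDiffAt ℝ 2 g x) :
    hessianMatrix (fun y => f y + g y) x = hessianMatrix f x + hessianMatrix g x := by
  ext i j
  have := iteratedFDeriv_add_apply (𝕜 := ℝ) (i := 2) (f := f) (g := g) (x := x) hf hg
  simp only [hessianMatrix, Matrix.of_apply, Matrix.add_apply]
  have h2 : (fun y => f y + g y) = f + g := rfl
  rw [h2, this]; rfl

lemma hess_neg {m : ℕ} {f : (Fin m → ℝ) → ℝ} {x : Fin m → ℝ} :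
    hessianMatrix (fun y => - f y) x = - hessianMatrix f x := by
  ext i j
  have := iteratedFDeriv_neg_apply (𝕜 := ℝ) (i := 2) (f := f) (x := x)
  simp only [hessianMatrix, Matrix.of_apply, Matrix.neg_apply]
  have h2 : (fun y => - f y) = -f := rfl
  rw [h2, this]; rfl

lemma hess_quad {m : ℕ} (f : (Fin m → ℝ) → ℝ) (x : Fin m → ℝ) (e : Fin m → ℝ) :
    fderiv ℝ (fderiv ℝ f) x e e = e ⬝ᵥ (hessianMatrix f x *ᵥ e) := by
  have he : e = ∑ i, e i • (Pi.single i (1:ℝ) : Fin m → ℝ) := by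
    ext j; simp [Finset.sum_apply, Pi.single_apply]
  conv_lhs => rw [he]
  simp only [map_sum, map_smul, _root_.sum_apply, _root_.smul_apply,
    smul_eq_mul, dotProduct, Matrix.mulVec, hess_apply, Finset.mul_sum]
  rw [Finset.sum_comm]
  refine Finset.sum_congr rfl fun i _ => Finset.sum_congr rfl fun j _ => ?_
  ring

lemma hess_symm {m : ℕ} {f : (Fin m → ℝ) → ℝ} {x : Fin m → ℝ}
    (hf : ContDiffAt ℝ 2 f x) : (hessianMatrix f x).IsSymm := by
  ext i j
  rw [Matrix.transpose_apply, hess_apply, hess_apply]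
  have : IsSymmSndFDerivAt ℝ f x := hf.isSymmSndFDerivAt (by simp)
  exact this _ _

lemma hess_locMax {m : ℕ} {f : (Fin m → ℝ) → ℝ} {x : Fin m → ℝ}
    (hf : ContDiffAt ℝ 2 f x) (hmax : IsLocalMax f x) : (-hessianMatrix f x).PosSemidef := by
  refine Matrix.PosSemidef.of_dotProduct_mulVec_nonneg ?_ ?_
  · have := hess_symm hf
    rw [Matrix.IsHermitian, Matrix.conjTranspose_eq_transpose_of_trivial, Matrix.transpose_neg, this]
  intro e
  rw [Matrix.neg_mulVec, dotProduct_neg]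
  have : star e = e := by ext; simp
  rw [this, ← hess_quad, neg_nonneg]
  by_contra! hpos
  set γ : ℝ → (Fin m → ℝ) := fun t => x + t • e with hγ
  have hγ0 : γ 0 = x := by simp [hγ]
  have hγd : ∀ t, HasDerivAt γ e t := by
    intro t
    have := ((hasDerivAt_id t).smul_const e).const_add x
    rw [one_smul] at this
    exact this
  have hγc : Continuous γ := by fun_prop
  set g : ℝ → ℝ := fun t => f (γ t) with hg
  have hev : ∀ᶠ y in nhds x, DifferentiableAt ℝ f y := by
    have := hf.eventually (by simp)
    filter_upwards [this] with y hy
    exact hy.differentiableAt (by simp)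
  have hg' : ∀ᶠ t in nhds (0:ℝ), deriv g t = fderiv ℝ f (γ t) e := by
    have h1 : Tendsto γ (nhds 0) (nhds x) := by
      have := hγc.tendsto 0; rwa [hγ0] at this
    filter_upwards [h1.eventually hev] with t ht
    exact (ht.hasFDerivAt.comp_hasDerivAt t (hγd t)).deriv
  have hd2 : deriv (deriv g) 0 = fderiv ℝ (fderiv ℝ f) x e e := by
    rw [Filter.EventuallyEq.deriv_eq hg']
    have h1 : HasFDerivAt (fderiv ℝ f) (fderiv ℝ (fderiv ℝ f) x) (γ 0) := by
      rw [hγ0]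
      exact ((aux_contDiffAt_fderiv hf).differentiableAt (by simp)).hasFDerivAt
    have h2 := h1.comp_hasDerivAt 0 (hγd 0)
    have h3 := h2.clm_apply (hasDerivAt_const 0 e)
    simpa using h3.deriv
  have hgmax : IsLocalMax g 0 := by
    have h1 : Tendsto γ (nhds 0) (nhds x) := by
      have := hγc.tendsto 0; rwa [hγ0] at this
    have := h1.eventually hmax
    filter_upwards [this] with t ht
    simpa [hg, hγ0] using ht
  have hgmin : IsLocalMin g 0 := by
    refine isLocalMin_of_deriv_deriv_pos (by rw [hd2]; exact hpos) hgmax.deriv_eq_zero ?_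
    have : ContinuousAt f (γ 0) := by rw [hγ0]; exact hf.continuousAt
    exact this.comp hγc.continuousAt
  have hconst : g =ᶠ[nhds 0] fun _ => g 0 := by
    filter_upwards [hgmax, hgmin] with t h1 h2
    exact le_antisymm h1 h2
  have h0 : deriv (deriv g) 0 = 0 := by
    have := hconst.deriv
    rw [this.deriv_eq]; simp
  rw [h0] at hd2
  linarith

lemma hess_smul {m : ℕ} {f : (Fin m → ℝ) → ℝ} {x : Fin m → ℝ} (δ : ℝ)
    (hf : ContDiffAt ℝ 2 f x) :
    hessianMatrix (fun y => δ * f y) x = δ • hessianMatrix f x := by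
  ext i j
  have := iteratedFDeriv_const_smul_apply (𝕜 := ℝ) (i := 2) (f := f) (x := x) (a := δ) hf
  simp only [hessianMatrix, Matrix.of_apply, Matrix.smul_apply]
  have h2 : (fun y => δ * f y) = δ • f := rfl
  rw [h2, this]; rfl

lemma hess_affine {m : ℕ} (a : (Fin m → ℝ) →ᵃ[ℝ] ℝ) (c : ℝ) :
    ContDiff ℝ 2 (fun y => c + 2 * a y) ∧ ∀ x, hessianMatrix (fun y => c + 2 * a y) x = 0 := by
  set L : (Fin m → ℝ) →L[ℝ] ℝ := LinearMap.toContinuousLinearMap ((2:ℝ) • a.linear) with hL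
  have h1 : (fun y => c + 2 * a y) = fun y => L y + (c + 2 * a 0) := by
    funext y
    have := a.decomp
    have h2 : a y = a.linear y + a 0 := by rw [this]; simp
    have h3 : L y = 2 * a.linear y := by simp [hL]
    rw [h2, h3]; ring
  rw [h1]
  refine ⟨by fun_prop, fun x => ?_⟩
  ext i j
  rw [hess_apply]
  have h2 : fderiv ℝ (fun y => L y + (c + 2 * a 0)) = fun _ => L := by
    funext y
    exact (L.hasFDerivAt.add_const _).fderiv
  rw [h2]; simp

lemma hess_continuousAt {m : ℕ} {f : (Fin m → ℝ) → ℝ} {x : Fin m → ℝ}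
    (hf : ContDiffAt ℝ 2 f x) : ContinuousAt (hessianMatrix f) x := by
  refine continuousAt_pi.2 fun i => continuousAt_pi.2 fun j => ?_
  have h1 : ContDiffAt ℝ 0 (fderiv ℝ (fderiv ℝ f)) x :=
    (aux_contDiffAt_fderiv hf).fderiv_right (m := 0) (by norm_num)
  have h2 := h1.continuousAt
  have h3 : (fun y => hessianMatrix f y i j) =
      fun y => fderiv ℝ (fderiv ℝ f) y (Pi.single i 1) (Pi.single j 1) := by
    funext y; rw [hess_apply]
  rw [h3]
  fun_prop

/-! ### Polynomials -/

lemma poly_hasFDerivAt {m : ℕ} (p : MvPolynomial (Fin m) ℝ) (x : Fin m → ℝ) :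
    HasFDerivAt (fun y => MvPolynomial.eval y p)
      (∑ i, MvPolynomial.eval x (MvPolynomial.pderiv i p) •
        (ContinuousLinearMap.proj i : (Fin m → ℝ) →L[ℝ] ℝ)) x := by
  induction p using MvPolynomial.induction_on with
  | C a => simpa using hasFDerivAt_const a x
  | add p q hp hq =>
    have := hp.add hq
    simp only [map_add, add_smul, Finset.sum_add_distrib]
    exact this
  | mul_X p j hp =>
    have h1 : HasFDerivAt (fun y : Fin m → ℝ => y j)
      (ContinuousLinearMap.proj j : (Fin m → ℝ) →L[ℝ] ℝ) x :=
      (ContinuousLinearMap.proj j : (Fin m → ℝ) →L[ℝ] ℝ).hasFDerivAt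
    have := hp.mul h1
    simp only [map_mul, MvPolynomial.eval_X]
    refine this.congr_fderiv ?_
    ext e
    simp only [Derivation.leibniz, MvPolynomial.pderiv_X, smul_eq_mul, map_add, map_mul,
      MvPolynomial.eval_X, add_smul, Finset.sum_add_distrib, Pi.single_apply]
    simp [Finset.mul_sum, Finset.sum_mul, mul_assoc, apply_ite]

lemma poly_contDiff {m : ℕ} (p : MvPolynomial (Fin m) ℝ) (k : WithTop ℕ∞) :
    ContDiff ℝ k (fun y => MvPolynomial.eval y p) := by
  have := AnalyticOnNhd.eval_mvPolynomial (𝕜 := ℝ) p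
  exact this.contDiff

lemma poly_hess {m : ℕ} (p : MvPolynomial (Fin m) ℝ) (x : Fin m → ℝ) (i j : Fin m) :
    hessianMatrix (fun y => MvPolynomial.eval y p) x i j =
      MvPolynomial.eval x (MvPolynomial.pderiv i (MvPolynomial.pderiv j p)) := by
  rw [hess_apply]
  have h1 : fderiv ℝ (fun y => MvPolynomial.eval y p) = fun x =>
      (∑ i, MvPolynomial.eval x (MvPolynomial.pderiv i p) •
        (ContinuousLinearMap.proj i : (Fin m → ℝ) →L[ℝ] ℝ)) := by
    funext x; exact (poly_hasFDerivAt p x).fderiv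
  rw [h1]
  have h2 := HasFDerivAt.fun_sum (u := Finset.univ) (x := x) (fun k _ =>
    (poly_hasFDerivAt (MvPolynomial.pderiv k p) x).smul_const
      (ContinuousLinearMap.proj k : (Fin m → ℝ) →L[ℝ] ℝ))
  rw [h2.fderiv]
  simp [Pi.single_apply]

/-- The constant coefficient operator attached to a linear functional on matrices. -/
noncomputable def Lop {m : ℕ} (l : Matrix (Fin m) (Fin m) ℝ →ₗ[ℝ] ℝ) :
    MvPolynomial (Fin m) ℝ →ₗ[ℝ] MvPolynomial (Fin m) ℝ :=
  ∑ i, ∑ j, l (Matrix.single i j 1) •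
    ((MvPolynomial.pderiv i).toLinearMap ∘ₗ (MvPolynomial.pderiv j).toLinearMap)

lemma Lop_eval {m : ℕ} (l : Matrix (Fin m) (Fin m) ℝ →ₗ[ℝ] ℝ)
    (p : MvPolynomial (Fin m) ℝ) (x : Fin m → ℝ) :
    MvPolynomial.eval x (Lop l p) = l (hessianMatrix (fun y => MvPolynomial.eval y p) x) := by
  conv_rhs => rw [Matrix.matrix_eq_sum_single (hessianMatrix (fun y => MvPolynomial.eval y p) x)]
  simp only [map_sum, Lop, LinearMap.sum_apply]
  refine Finset.sum_congr rfl fun i _ => Finset.sum_congr rfl fun j _ => ?_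
  have : Matrix.single i j (hessianMatrix (fun y => MvPolynomial.eval y p) x i j) =
    hessianMatrix (fun y => MvPolynomial.eval y p) x i j • Matrix.single i j (1:ℝ) := by
    simp
  rw [this, map_smul, poly_hess]
  simp [mul_comm]

lemma pderiv_deg {m : ℕ} (p : MvPolynomial (Fin m) ℝ) (i : Fin m) :
    (MvPolynomial.pderiv i p).totalDegree ≤ p.totalDegree - 1 := by
  conv_lhs => rw [p.as_sum]
  rw [map_sum]
  refine MvPolynomial.totalDegree_finsetSum_le ?_
  intro s hs
  rw [MvPolynomial.pderiv_monomial]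
  by_cases h0 : s i = 0
  · simp [h0]
  refine (MvPolynomial.totalDegree_monomial_le _ _).trans ?_
  have h1 := MvPolynomial.le_totalDegree hs
  have h2 : (s - Finsupp.single i 1) + Finsupp.single i 1 = s := by
    ext k
    by_cases hk : k = i
    · subst hk; simp; omega
    · simp [hk, Finsupp.single_apply, Ne.symm hk]
  have h3 : ((s - Finsupp.single i 1) + Finsupp.single i 1).sum (fun _ e => e)
      = (s - Finsupp.single i 1).sum (fun _ e => e) + 1 := by
    rw [Finsupp.sum_add_index' (by simp) (by simp)]; simp
  rw [h2] at h3
  have h4 : (s - Finsupp.single i 1).sum (fun _ => id) = (s - Finsupp.single i 1).sum (fun _ e => e) := rfl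
  have h5 : s.sum (fun _ => id) = s.sum (fun _ e => e) := rfl
  omega

lemma Lop_deg {m : ℕ} (l : Matrix (Fin m) (Fin m) ℝ →ₗ[ℝ] ℝ)
    (p : MvPolynomial (Fin m) ℝ) : (Lop l p).totalDegree ≤ p.totalDegree - 2 := by
  simp only [Lop, LinearMap.sum_apply]
  refine MvPolynomial.totalDegree_finsetSum_le fun i _ =>
    MvPolynomial.totalDegree_finsetSum_le fun j _ => ?_
  refine (MvPolynomial.totalDegree_smul_le _ _).trans ?_
  refine (pderiv_deg _ _).trans ?_
  have := pderiv_deg p j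
  have h2 : ((MvPolynomial.pderiv j).toLinearMap p).totalDegree =
    (MvPolynomial.pderiv j p).totalDegree := rfl
  omega

/-- Squared Euclidean distance polynomial. -/
noncomputable def sqp {m : ℕ} (z : Fin m → ℝ) : MvPolynomial (Fin m) ℝ :=
  ∑ i, (MvPolynomial.X i - MvPolynomial.C (z i)) ^ 2

/-- Squared Euclidean distance. -/
def sqd {m : ℕ} (z x : Fin m → ℝ) : ℝ := ∑ i, (x i - z i) ^ 2

lemma sqp_eval {m : ℕ} (z x : Fin m → ℝ) : MvPolynomial.eval x (sqp z) = sqd z x := by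
  simp [sqp, sqd]

lemma sqp_deg {m : ℕ} (z : Fin m → ℝ) : (sqp z).totalDegree ≤ 2 := by
  refine MvPolynomial.totalDegree_finsetSum_le fun i _ => ?_
  refine (MvPolynomial.totalDegree_pow _ _).trans ?_
  have : (MvPolynomial.X i - MvPolynomial.C (z i) : MvPolynomial (Fin m) ℝ).totalDegree ≤ 1 := by
    refine (MvPolynomial.totalDegree_sub _ _).trans ?_
    simp
  omega

lemma sqd_hess {m : ℕ} (z x : Fin m → ℝ) : hessianMatrix (sqd z) x = (2:ℝ) • 1 := by
  have : sqd z = fun y => MvPolynomial.eval y (sqp z) := by funext y; rw [sqp_eval]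
  rw [this]
  ext i j
  rw [poly_hess]
  have h1 : MvPolynomial.pderiv j (sqp z) = MvPolynomial.C 2 * (MvPolynomial.X j - MvPolynomial.C (z j)) := by
    simp only [sqp, map_sum, Derivation.leibniz_pow, MvPolynomial.pderiv_X, MvPolynomial.pderiv_C, map_sub]
    rw [Finset.sum_eq_single j]
    · have : (2 : MvPolynomial (Fin m) ℝ) = MvPolynomial.C 2 := (map_ofNat MvPolynomial.C 2).symm
      simp [this]
    · intro k _ hk; simp [hk]
    · simp
  rw [h1, MvPolynomial.pderiv_C_mul]
  by_cases h : i = j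
  · subst h; simp
  · simp [Pi.single_apply, Matrix.one_apply, h, Ne.symm h]

lemma sqd_contDiff {m : ℕ} (z : Fin m → ℝ) (k : WithTop ℕ∞) : ContDiff ℝ k (sqd z) := by
  have : sqd z = fun y => MvPolynomial.eval y (sqp z) := by funext y; rw [sqp_eval]
  rw [this]; exact poly_contDiff _ _

lemma sqd_nonneg {m : ℕ} (z x : Fin m → ℝ) : 0 ≤ sqd z x :=
  Finset.sum_nonneg fun i _ => sq_nonneg _

lemma sqd_closed_compact {m : ℕ} (z : Fin m → ℝ) (r : ℝ) :
    IsCompact {x | sqd z x ≤ r} := by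
  refine Metric.isCompact_of_isClosed_isBounded
    (isClosed_le (sqd_contDiff z 0).continuous continuous_const) ?_
  refine (Metric.isBounded_closedBall (x := z) (r := |r| + 1)).subset ?_
  intro x hx
  rw [Metric.mem_closedBall, dist_pi_le_iff (by positivity)]
  intro i
  have h1 : (x i - z i)^2 ≤ sqd z x :=
    Finset.single_le_sum (f := fun i => (x i - z i)^2) (fun i _ => sq_nonneg _) (Finset.mem_univ i)
  rw [Real.dist_eq]
  have h2 : r ≤ |r| := le_abs_self r
  have h3 : (x i - z i)^2 ≤ |r| := h1.trans ((show sqd z x ≤ r from hx).trans h2)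
  rw [← sq_abs] at h3
  nlinarith [abs_nonneg (x i - z i), abs_nonneg r]

/-! ### Maximum principle and the Dirichlet problem for polynomials -/

lemma max_principle {m : ℕ} (l : Matrix (Fin m) (Fin m) ℝ →ₗ[ℝ] ℝ)
    (hl : ∀ Q : Matrix (Fin m) (Fin m) ℝ, Q.PosSemidef → 0 ≤ l Q)
    (z : Fin m → ℝ) (R M : ℝ) (f : (Fin m → ℝ) → ℝ)
    (hc : ∀ x, sqd z x ≤ R → ContDiffAt ℝ 2 f x)
    (hpos : ∀ x, sqd z x < R → 0 < l (hessianMatrix f x))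
    (hM : ∀ x, sqd z x = R → f x ≤ M) : ∀ x, sqd z x ≤ R → f x ≤ M := by
  intro x hx
  obtain ⟨y, hy, hmax⟩ := (sqd_closed_compact z R).exists_isMaxOn ⟨x, hx⟩
    (f := f) (fun u hu => (hc u hu).continuousAt.continuousWithinAt)
  refine (hmax hx).trans ?_
  rcases lt_or_eq_of_le (show sqd z y ≤ R from hy) with h | h
  · exfalso
    have hopen : IsOpen {x | sqd z x < R} :=
      isOpen_lt (sqd_contDiff z 0).continuous continuous_const
    have hloc : IsLocalMax f y := by
      filter_upwards [hopen.mem_nhds h] with u hu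
      exact hmax (le_of_lt (show sqd z u < R from hu))
    have h1 := hl _ (hess_locMax (hc y hy) hloc)
    have h2 := hpos y h
    rw [map_neg] at h1
    linarith
  · exact hM y h

lemma max_principle_zero {m : ℕ} (l : Matrix (Fin m) (Fin m) ℝ →ₗ[ℝ] ℝ)
    (hl : ∀ Q : Matrix (Fin m) (Fin m) ℝ, Q.PosSemidef → 0 ≤ l Q) (hl1 : 0 < l 1)
    (z : Fin m → ℝ) (R : ℝ) (f : (Fin m → ℝ) → ℝ)
    (hc : ContDiff ℝ 2 f)
    (hpos : ∀ x, l (hessianMatrix f x) = 0)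
    (hM : ∀ x, sqd z x = R → f x = 0) : ∀ x, sqd z x ≤ R → f x ≤ 0 := by
  intro x hx
  have hR : 0 ≤ R := (sqd_nonneg z x).trans hx
  refine le_of_forall_pos_le_add fun ε hε => ?_
  set δ := ε / (R + 1) with hδ
  have hδ0 : 0 < δ := by positivity
  have hs : ContDiff ℝ 2 (fun y => δ * sqd z y) := contDiff_const.mul (sqd_contDiff z 2)
  have hh : ∀ y, hessianMatrix (fun y => δ * sqd z y) y = δ • hessianMatrix (sqd z) y :=
    fun y => hess_smul δ (sqd_contDiff z 2).contDiffAt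
  have := max_principle l hl z R (δ * R) (fun y => f y + δ * sqd z y)
    (fun x _ => (hc.add hs).contDiffAt)
    (fun y _ => by
      rw [hess_add hc.contDiffAt hs.contDiffAt, map_add, hpos, hh, sqd_hess]
      simp only [map_smul, smul_eq_mul]; positivity)
    (fun y hy => by simp [hM y hy, hy]) x hx
  have h1 : δ * R ≤ ε := by
    rw [hδ, div_mul_eq_mul_div, div_le_iff₀ (by linarith)]
    nlinarith
  have h2 := mul_nonneg hδ0.le (sqd_nonneg z x)
  linarith

lemma poly_vanish {m : ℕ} (q : MvPolynomial (Fin m) ℝ) (z : Fin m → ℝ) (R : ℝ) (hR : 0 < R)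
    (h : ∀ x, sqd z x < R → MvPolynomial.eval x q = 0) : q = 0 := by
  have hopen : IsOpen {x | sqd z x < R} :=
    isOpen_lt (sqd_contDiff z 0).continuous continuous_const
  have hz : sqd z z < R := by simpa [sqd] using hR
  obtain ⟨ε, hε, hb⟩ := Metric.isOpen_iff.1 hopen z hz
  refine MvPolynomial.funext_set (fun i => Metric.ball (z i) ε) (fun i => ?_) ?_
  · rw [Real.ball_eq_Ioo]; exact Set.Ioo_infinite (by linarith)
  · intro x hx
    rw [map_zero]
    apply h
    apply hb
    rw [ball_pi _ hε]
    exact hx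

lemma poly_dirichlet {m : ℕ} (l : Matrix (Fin m) (Fin m) ℝ →ₗ[ℝ] ℝ)
    (hl : ∀ Q : Matrix (Fin m) (Fin m) ℝ, Q.PosSemidef → 0 ≤ l Q) (hl1 : 0 < l 1)
    (z : Fin m → ℝ) (R : ℝ) (hR : 0 < R) (f : MvPolynomial (Fin m) ℝ) (b : ℝ) :
    ∃ h : MvPolynomial (Fin m) ℝ,
      (∀ x, sqd z x = R → MvPolynomial.eval x h = MvPolynomial.eval x f) ∧
      ∀ x, l (hessianMatrix (fun y => MvPolynomial.eval y h) x) = b := by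
  set ρ : MvPolynomial (Fin m) ℝ := MvPolynomial.C R - sqp z with hρ
  have hρe : ∀ x, MvPolynomial.eval x ρ = R - sqd z x := by
    intro x; simp [hρ, sqp_eval]
  have hρd : ρ.totalDegree ≤ 2 := by
    refine (MvPolynomial.totalDegree_sub _ _).trans ?_
    simpa using sqp_deg z
  set d := f.totalDegree
  set V := MvPolynomial.restrictTotalDegree (Fin m) ℝ d
  have hmem : ∀ q ∈ V, (Lop l) (ρ * q) ∈ V := by
    intro q hq
    rw [MvPolynomial.mem_restrictTotalDegree] at hq ⊢
    have h1 := Lop_deg l (ρ * q)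
    have h2 := MvPolynomial.totalDegree_mul ρ q
    omega
  let T0 : MvPolynomial (Fin m) ℝ →ₗ[ℝ] MvPolynomial (Fin m) ℝ :=
    (Lop l) ∘ₗ (LinearMap.mulLeft ℝ ρ)
  let T : V →ₗ[ℝ] V := T0.restrict hmem
  have hinj : Function.Injective T := by
    rw [← LinearMap.ker_eq_bot, LinearMap.ker_eq_bot']
    rintro ⟨q, hq⟩ hT
    have hT0 : Lop l (ρ * q) = 0 := congrArg Subtype.val hT
    have hz : ∀ x, l (hessianMatrix (fun y => MvPolynomial.eval y (ρ * q)) x) = 0 := by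
      intro x; rw [← Lop_eval, hT0, map_zero]
    have hz' : ∀ x, l (hessianMatrix (fun y => - MvPolynomial.eval y (ρ * q)) x) = 0 := by
      intro x; rw [hess_neg, map_neg, hz, neg_zero]
    have hb : ∀ x, sqd z x = R → MvPolynomial.eval x (ρ * q) = 0 := by
      intro x hx; rw [map_mul, hρe, hx]; simp
    have h1 := max_principle_zero l hl hl1 z R _ (poly_contDiff (ρ * q) 2) hz hb
    have h2 := max_principle_zero l hl hl1 z R _ (poly_contDiff (ρ * q) 2).neg hz'
      (fun x hx => by simp only [hb x hx, neg_zero])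
    have : q = 0 := by
      refine poly_vanish q z R hR fun x hx => ?_
      have h3 := h1 x hx.le
      have h4 := h2 x hx.le
      have h5 : MvPolynomial.eval x (ρ * q) = 0 := by linarith
      rw [map_mul, hρe] at h5
      rcases mul_eq_zero.1 h5 with h | h
      · linarith
      · exact h
    exact Subtype.ext this
  have hsurj : Function.Surjective T := LinearMap.injective_iff_surjective.1 hinj
  have htgt : MvPolynomial.C b - Lop l f ∈ V := by
    rw [MvPolynomial.mem_restrictTotalDegree]
    refine (MvPolynomial.totalDegree_sub _ _).trans ?_
    have := Lop_deg l f
    simp only [MvPolynomial.totalDegree_C]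
    omega
  obtain ⟨⟨q, hq⟩, hTq⟩ := hsurj ⟨_, htgt⟩
  have hTq' : Lop l (ρ * q) = MvPolynomial.C b - Lop l f := congrArg Subtype.val hTq
  refine ⟨f + ρ * q, fun x hx => ?_, fun x => ?_⟩
  · rw [map_add, map_mul, hρe, hx]; simp
  · rw [← Lop_eval, map_add, hTq']; simp

lemma poly_approx {m : ℕ} (S : Set (Fin m → ℝ)) (hS : IsCompact S) (g : C(S, ℝ)) (η : ℝ)
    (hη : 0 < η) : ∃ p : MvPolynomial (Fin m) ℝ, ∀ x : S, |MvPolynomial.eval x.1 p - g x| < η := by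
  have : CompactSpace S := isCompact_iff_compactSpace.1 hS
  let φ : MvPolynomial (Fin m) ℝ →ₐ[ℝ] C(S, ℝ) :=
    MvPolynomial.aeval (fun i => (⟨fun x : S => x.1 i, (continuous_apply i).comp continuous_subtype_val⟩ : C(S, ℝ)))
  have hφ : ∀ (p : MvPolynomial (Fin m) ℝ) (x : S), φ p x = MvPolynomial.eval x.1 p := by
    intro p x
    induction p using MvPolynomial.induction_on with
    | C a => simp [φ]
    | add p q hp hq => simp [hp, hq]
    | mul_X p j hp => simp only [map_mul, ContinuousMap.mul_apply, hp]; simp [φ]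
  have hsep : φ.range.SeparatesPoints := by
    intro x y hxy
    have : ∃ i, x.1 i ≠ y.1 i := by
      by_contra! h
      exact hxy (Subtype.ext (funext h))
    obtain ⟨i, hi⟩ := this
    refine ⟨_, ⟨φ (MvPolynomial.X i), ⟨_, rfl⟩, rfl⟩, ?_⟩
    simpa [hφ] using hi
  obtain ⟨⟨_, ⟨p, rfl⟩⟩, h⟩ := ContinuousMap.exists_mem_subalgebra_near_continuous_of_separatesPoints
    φ.range hsep g g.continuous η hη
  refine ⟨p, fun x => ?_⟩
  have := h x
  simpa [hφ, Real.norm_eq_abs] using this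

/-! ### The sum theorem -/

lemma ereal_sub_le (a : EReal) (r : ℝ) : a + ((-r : ℝ) : EReal) ≤ ((0:ℝ) : EReal) ↔ a ≤ (r : EReal) := by
  induction a with
  | bot => simp
  | top => simp
  | coe a => norm_cast; constructor <;> intro h <;> linarith

lemma ereal_half_le (e : EReal) (r s : ℝ) :
    (((1:ℝ)/2 : ℝ) : EReal) * e + (r : EReal) ≤ (s : EReal) ↔ e ≤ ((2 * (s - r) : ℝ) : EReal) := by
  induction e with
  | bot => rw [EReal.coe_mul_bot_of_pos (by norm_num)]; simp
  | top =>
    rw [EReal.coe_mul_top_of_pos (by norm_num), EReal.top_add_coe, top_le_iff, top_le_iff]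
    exact iff_of_false (EReal.coe_ne_top _) (EReal.coe_ne_top _)
  | coe a => norm_cast; constructor <;> intro h <;> linarith

lemma ereal_split (a b : EReal) (s : ℝ) (ha : a ≠ ⊤) (hb : b ≠ ⊤) (h : a + b < (s : EReal)) :
    ∃ t : ℝ, a < (t : EReal) ∧ b < ((s - t : ℝ) : EReal) := by
  induction b with
  | top => exact absurd rfl hb
  | bot =>
    obtain ⟨t, ht⟩ := EReal.lt_iff_exists_real_btwn.1 (lt_top_iff_ne_top.2 ha)
    exact ⟨t, ht.1, EReal.bot_lt_coe _⟩
  | coe b =>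
    induction a with
    | top => exact absurd rfl ha
    | bot => exact ⟨s - b - 1, EReal.bot_lt_coe _, by norm_cast; linarith⟩
    | coe a =>
      norm_cast at h
      exact ⟨(a + (s - b)) / 2, by norm_cast; linarith, by norm_cast; linarith⟩

lemma insertion {m : ℕ} (U S : Set (Fin m → ℝ)) (hU : IsOpen U) (hSU : S ⊆ U)
    (v w : (Fin m → ℝ) → EReal) (hv : ∀ x ∈ U, v x ≠ ⊤) (hw : ∀ x ∈ U, w x ≠ ⊤)
    (hvu : UpperSemicontinuousOn v U) (hwu : UpperSemicontinuousOn w U)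
    (g : C(S, ℝ)) (h : ∀ x : S, v x.1 + w x.1 < (g x : EReal)) :
    ∃ f : C(S, ℝ), ∀ x : S, v x.1 < (f x : EReal) ∧ w x.1 < ((g x - f x : ℝ) : EReal) := by
  refine exists_continuous_forall_mem_convex_of_local_const
    (t := fun x : S => {t : ℝ | v x.1 < (t : EReal) ∧ w x.1 < ((g x - t : ℝ) : EReal)}) ?_ ?_
  · intro x
    refine Set.OrdConnected.convex ⟨?_⟩
    rintro a ⟨ha1, ha2⟩ b ⟨hb1, hb2⟩ c ⟨hc1, hc2⟩
    exact ⟨ha1.trans_le (by exact_mod_cast hc1), hb2.trans_le (by norm_cast; linarith)⟩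
  · intro x
    obtain ⟨t, ht1, ht2⟩ := ereal_split _ _ _ (hv _ (hSU x.2)) (hw _ (hSU x.2)) (h x)
    obtain ⟨s, hs1, hs2⟩ := EReal.lt_iff_exists_real_btwn.1 ht2
    have e1 : ∀ᶠ y in nhds x.1, v y < (t : EReal) := by
      have := hvu x.1 (hSU x.2) _ ht1
      rwa [hU.nhdsWithin_eq (hSU x.2)] at this
    have e2 : ∀ᶠ y in nhds x.1, w y < (s : EReal) := by
      have := hwu x.1 (hSU x.2) _ hs1
      rwa [hU.nhdsWithin_eq (hSU x.2)] at this
    have e3 : ∀ᶠ y in nhds x, s < g y - t := by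
      have : ContinuousAt (fun y => g y - t) x := by fun_prop
      exact this.eventually (lt_mem_nhds (by exact_mod_cast hs2))
    have hc : Tendsto (Subtype.val : S → _) (nhds x) (nhds x.1) := continuous_subtype_val.tendsto x
    refine ⟨t, ?_⟩
    filter_upwards [hc.eventually e1, hc.eventually e2, e3] with y h1 h2 h3
    exact ⟨h1, h2.trans (by exact_mod_cast h3)⟩

lemma typeF_le_poly {m : ℕ} {F : Set (Matrix (Fin m) (Fin m) ℝ)} {U : Set (Fin m → ℝ)}
    {v : (Fin m → ℝ) → EReal} (hv : IsTypeF F U v)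
    (l : Matrix (Fin m) (Fin m) ℝ →ₗ[ℝ] ℝ) (b : ℝ) (hb : ∀ A ∈ symInterior F, b < l A)
    (z : Fin m → ℝ) (R : ℝ) (hK : {x | sqd z x ≤ R} ⊆ U)
    (h : MvPolynomial (Fin m) ℝ)
    (hh : ∀ x, l (hessianMatrix (fun y => MvPolynomial.eval y h) x) = b)
    (hS : ∀ x, sqd z x = R → v x ≤ (MvPolynomial.eval x h : EReal)) :
    ∀ x, sqd z x ≤ R → v x ≤ (MvPolynomial.eval x h : EReal) := by
  have h1 := hv.2.2 (fun y => - MvPolynomial.eval y h) (poly_contDiff h 2).neg.contDiffOn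
    (fun x _ => by
      rw [hess_neg]
      refine ⟨(hess_symm (poly_contDiff h 2).contDiffAt).neg, fun hx => ?_⟩
      rw [neg_neg] at hx
      have := hb _ hx
      rw [hh] at this
      exact lt_irrefl _ this)
  have h2 := h1 0 {x | sqd z x ≤ R} (sqd_closed_compact z R) hK (fun x hx => by
    have := frontier_le_subset_eq (sqd_contDiff z 0).continuous continuous_const hx
    exact (ereal_sub_le _ _).2 (hS x this))
  intro x hx
  exact (ereal_sub_le _ _).1 (h2 x hx)

lemma touch_lemma {m : ℕ} {F : Set (Matrix (Fin m) (Fin m) ℝ)} {U : Set (Fin m → ℝ)}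
    (hU : IsOpen U)
    {v w : (Fin m → ℝ) → EReal} (hv : IsTypeF F U v) (hw : IsTypeF F U w)
    (l : Matrix (Fin m) (Fin m) ℝ →ₗ[ℝ] ℝ)
    (hl : ∀ Q : Matrix (Fin m) (Fin m) ℝ, Q.PosSemidef → 0 ≤ l Q) (hl1 : 0 < l 1)
    (b : ℝ) (hb : ∀ A ∈ symInterior F, b < l A)
    (z : Fin m → ℝ) (R : ℝ) (hR : 0 < R) (hK : {x | sqd z x ≤ R} ⊆ U)
    (χ : (Fin m → ℝ) → ℝ) (hχ : ∀ x, sqd z x ≤ R → ContDiffAt ℝ 2 χ x)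
    (hχl : ∀ x, sqd z x < R → l (hessianMatrix χ x) < 2 * b)
    (κ : ℝ) (hκ : 0 < κ)
    (hS : ∀ x, sqd z x = R → v x + w x < ((χ x - κ : ℝ) : EReal)) :
    v z + w z < (χ z : EReal) := by
  set S := {x | sqd z x = R} with hSdef
  have hSc : IsCompact S := (sqd_closed_compact z R).of_isClosed_subset
    (isClosed_eq (sqd_contDiff z 0).continuous continuous_const) (fun x hx => le_of_eq hx)
  have hχc : Continuous (fun x : S => χ x.1) := by
    rw [continuous_iff_continuousAt]
    intro x
    exact (hχ x.1 (le_of_eq x.2)).continuousAt.comp continuous_subtype_val.continuousAt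
  let g : C(S, ℝ) := ⟨fun x => χ x.1 - κ, hχc.sub continuous_const⟩
  obtain ⟨f, hf⟩ := insertion U S hU (fun x hx => hK (le_of_eq hx)) v w hv.1 hw.1 hv.2.1 hw.2.1 g
    (fun x => hS x.1 x.2)
  obtain ⟨p1, hp1⟩ := poly_approx S hSc ⟨fun x => f x + κ / 8, by fun_prop⟩ (κ / 8) (by positivity)
  obtain ⟨p2, hp2⟩ := poly_approx S hSc ⟨fun x => g x - f x + κ / 8, by fun_prop⟩ (κ / 8)
    (by positivity)
  obtain ⟨h1, hb1, hh1⟩ := poly_dirichlet l hl hl1 z R hR p1 b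
  obtain ⟨h2, hb2, hh2⟩ := poly_dirichlet l hl hl1 z R hR p2 b
  have hz : sqd z z = 0 := by simp [sqd]
  have c1 := typeF_le_poly hv l b hb z R hK h1 hh1 (fun x hx => by
    refine (hf ⟨x, hx⟩).1.le.trans ?_
    have := abs_lt.1 (hp1 ⟨x, hx⟩)
    simp only [ContinuousMap.coe_mk] at this
    rw [hb1 x hx]
    norm_cast; linarith) z (by linarith)
  have c2 := typeF_le_poly hw l b hb z R hK h2 hh2 (fun x hx => by
    refine (hf ⟨x, hx⟩).2.le.trans ?_
    have := abs_lt.1 (hp2 ⟨x, hx⟩)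
    simp only [ContinuousMap.coe_mk] at this
    rw [hb2 x hx]
    norm_cast; linarith) z (by linarith)
  have hP : ContDiff ℝ 2 (fun y => MvPolynomial.eval y (h1 + h2)) := poly_contDiff _ 2
  have hPl : ∀ x, l (hessianMatrix (fun y => MvPolynomial.eval y (h1 + h2)) x) = 2 * b := by
    intro x
    rw [← Lop_eval, map_add, map_add, Lop_eval, Lop_eval, hh1, hh2]; ring
  have c3 := max_principle l hl z R (-κ/2)
    (fun y => MvPolynomial.eval y (h1 + h2) + - χ y)
    (fun x hx => hP.contDiffAt.add (hχ x hx).neg)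
    (fun x hx => by
      rw [hess_add hP.contDiffAt (hχ x hx.le).neg, map_add, hPl, hess_neg, map_neg]
      have := hχl x hx
      linarith)
    (fun x hx => by
      have e1 := abs_lt.1 (hp1 ⟨x, hx⟩)
      have e2 := abs_lt.1 (hp2 ⟨x, hx⟩)
      simp only [ContinuousMap.coe_mk, g] at e1 e2
      rw [map_add, hb1 x hx, hb2 x hx]
      linarith) z (by linarith)
  refine (add_le_add c1 c2).trans_lt ?_
  rw [map_add] at c3
  norm_cast
  linarith

lemma exists_smul_one_sub_psd {m : ℕ} (B : Matrix (Fin m) (Fin m) ℝ) (hB : B.IsSymm) :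
    ∃ k : ℝ, (k • (1 : Matrix (Fin m) (Fin m) ℝ) - B).PosSemidef := by
  refine ⟨∑ i, ∑ j, |B i j|, Matrix.PosSemidef.of_dotProduct_mulVec_nonneg ?_ fun x => ?_⟩
  · rw [Matrix.IsHermitian, Matrix.conjTranspose_eq_transpose_of_trivial, Matrix.transpose_sub,
      hB, Matrix.transpose_smul, Matrix.transpose_one]
  have hx : star x = x := by ext; simp
  rw [hx, Matrix.sub_mulVec, dotProduct_sub, sub_nonneg, Matrix.smul_mulVec, Matrix.one_mulVec,
    dotProduct_smul, smul_eq_mul, Finset.sum_mul]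
  simp only [Finset.sum_mul]
  have hexp : x ⬝ᵥ B *ᵥ x = ∑ i, ∑ j, x i * (B i j * x j) := by
    simp only [dotProduct, Matrix.mulVec, Finset.mul_sum]
  rw [hexp]
  simp only [dotProduct]
  refine Finset.sum_le_sum fun i _ => Finset.sum_le_sum fun j _ => ?_
  have h1 : x i * x i ≤ ∑ k, x k * x k :=
    Finset.single_le_sum (f := fun k => x k * x k) (fun k _ => mul_self_nonneg _) (Finset.mem_univ i)
  have h2 : x j * x j ≤ ∑ k, x k * x k :=
    Finset.single_le_sum (f := fun k => x k * x k) (fun k _ => mul_self_nonneg _) (Finset.mem_univ j)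
  have h3 : x i * (B i j * x j) ≤ |B i j| * |x i * x j| := by
    rw [← abs_mul]
    refine le_trans (le_of_eq ?_) (le_abs_self _)
    ring
  refine h3.trans (mul_le_mul_of_nonneg_left ?_ (abs_nonneg _))
  rw [abs_le]
  constructor <;> nlinarith [sq_nonneg (x i - x j), sq_nonneg (x i + x j)]

lemma symInterior_open {m : ℕ} (F : Set (Matrix (Fin m) (Fin m) ℝ))
    (A : Matrix (Fin m) (Fin m) ℝ) (hA : A ∈ symInterior F) :
    ∀ᶠ B in nhds A, B.IsSymm → B ∈ symInterior F := by
  have := eventually_eventually_nhds.2 hA.2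
  filter_upwards [this] with B hB hs
  exact ⟨hs, hB⟩

lemma separation {n : ℕ} (F : Set (Matrix (Fin (n+1)) (Fin (n+1)) ℝ))
    (hG : ∀ A ∈ symInterior F, ∀ B ∈ symInterior F, ∀ t : ℝ, 0 ≤ t → t ≤ 1 →
      ∀ Q : Matrix (Fin (n+1)) (Fin (n+1)) ℝ, Q.PosSemidef →
        (1 - t) • A + t • B + Q ∈ symInterior F)
    (A0 : Matrix (Fin (n+1)) (Fin (n+1)) ℝ) (hA0 : A0.IsSymm) (hA0F : A0 ∉ symInterior F) :
    ∃ l : Matrix (Fin (n+1)) (Fin (n+1)) ℝ →ₗ[ℝ] ℝ,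
      (∀ Q : Matrix (Fin (n+1)) (Fin (n+1)) ℝ, Q.PosSemidef → 0 ≤ l Q) ∧ 0 < l 1 ∧
      ∀ A ∈ symInterior F, l A0 < l A := by
  by_cases hne : (symInterior F).Nonempty
  swap
  · rw [Set.not_nonempty_iff_eq_empty] at hne
    refine ⟨Matrix.traceLinearMap _ ℝ ℝ, fun Q hQ => ?_, ?_, by simp [hne]⟩
    · exact hQ.trace_nonneg
    · simp; positivity
  obtain ⟨A1, hA1⟩ := hne
  let σ : Matrix (Fin (n+1)) (Fin (n+1)) ℝ →ₗ[ℝ] Matrix (Fin (n+1)) (Fin (n+1)) ℝ :=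
    { toFun := fun A => (1/2 : ℝ) • (A + Aᵀ)
      map_add' := by intro A B; simp only [Matrix.transpose_add, ← smul_add]; congr 1; abel
      map_smul' := by
        intro c A
        simp only [Matrix.transpose_smul, ← smul_add, RingHom.id_apply]
        rw [smul_comm] }
  have hσ : ∀ A, σ A = (1/2 : ℝ) • (A + Aᵀ) := fun _ => rfl
  have hσs : ∀ A, (σ A).IsSymm := by
    intro A
    rw [hσ, Matrix.IsSymm, Matrix.transpose_smul, Matrix.transpose_add, Matrix.transpose_transpose,
      add_comm Aᵀ A]
  have hσi : ∀ A : Matrix (Fin (n+1)) (Fin (n+1)) ℝ, A.IsSymm → σ A = A := by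
    intro A hA
    rw [hσ, hA, ← two_smul ℝ A, smul_smul]; norm_num
  have hσc : Continuous σ := by
    change Continuous fun A : Matrix (Fin (n+1)) (Fin (n+1)) ℝ => (1/2 : ℝ) • (A + Aᵀ)
    fun_prop
  set G := σ ⁻¹' (symInterior F) with hGdef
  have hGo : IsOpen G := by
    rw [isOpen_iff_mem_nhds]
    intro A hA
    have := hσc.continuousAt.eventually (symInterior_open F (σ A) hA)
    filter_upwards [this] with B hB
    exact hB (hσs B)
  have hGc : Convex ℝ G := by
    intro A hA B hB s t hs ht hst
    have h1 : s = 1 - t := by linarith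
    have := hG _ hA _ hB t ht (by linarith) 0 Matrix.PosSemidef.zero
    rw [add_zero, ← h1] at this
    rw [hGdef, Set.mem_preimage, map_add, map_smul, map_smul]
    exact this
  have hA0G : A0 ∉ G := by
    rwa [hGdef, Set.mem_preimage, hσi A0 hA0]
  obtain ⟨f, hf⟩ := geometric_hahn_banach_point_open hGc hGo hA0G
  have hfG : ∀ A ∈ symInterior F, f A0 < f A := by
    intro A hA
    apply hf
    rwa [hGdef, Set.mem_preimage, hσi A hA.1]
  have hpsd : ∀ Q : Matrix (Fin (n+1)) (Fin (n+1)) ℝ, Q.PosSemidef → 0 ≤ f Q := by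
    intro Q hQ
    by_contra! hneg
    set k : ℝ := (f A0 - f A1) / f Q with hk
    have h1 := hfG _ hA1
    have hk0 : 0 ≤ k := div_nonneg_of_nonpos (by linarith) hneg.le
    have h2 := hG _ hA1 _ hA1 0 le_rfl zero_le_one (k • Q) (hQ.smul hk0)
    have h3 := hfG _ h2
    simp only [sub_zero, one_smul, zero_smul, add_zero, map_add, map_smul, smul_eq_mul] at h3
    have h4 : k * f Q = f A0 - f A1 := by rw [hk]; exact div_mul_cancel₀ _ hneg.ne
    linarith
  refine ⟨f.toLinearMap, hpsd, ?_, hfG⟩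
  change 0 < f 1
  have h1 := hfG _ hA1
  obtain ⟨k, hk⟩ := exists_smul_one_sub_psd (A1 - A0) (hA1.1.sub hA0)
  have h2 := hpsd _ hk
  rw [map_sub, map_smul, map_sub, smul_eq_mul] at h2
  have h3 := hpsd 1 Matrix.PosSemidef.one
  rcases lt_or_eq_of_le h3 with h | h
  · exact h
  · rw [← h] at h2; linarith

lemma sqd_small {m : ℕ} (z : Fin m → ℝ) {N : Set (Fin m → ℝ)} (hN : N ∈ nhds z) :
    ∃ R : ℝ, 0 < R ∧ {x | sqd z x ≤ R} ⊆ N := by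
  obtain ⟨ε, hε, hb⟩ := Metric.mem_nhds_iff.1 hN
  refine ⟨(ε/2)^2, by positivity, fun x hx => hb ?_⟩
  rw [Metric.mem_ball, dist_pi_lt_iff hε]
  intro i
  have h1 : (x i - z i)^2 ≤ sqd z x :=
    Finset.single_le_sum (f := fun i => (x i - z i)^2) (fun i _ => sq_nonneg _) (Finset.mem_univ i)
  have h2 := abs_le_of_sq_le_sq (h1.trans hx) (by positivity)
  rw [Real.dist_eq]
  linarith

lemma usc_add {m : ℕ} {U : Set (Fin m → ℝ)} {v w : (Fin m → ℝ) → EReal}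
    (hv : ∀ x ∈ U, v x ≠ ⊤) (hw : ∀ x ∈ U, w x ≠ ⊤)
    (hvu : UpperSemicontinuousOn v U) (hwu : UpperSemicontinuousOn w U) :
    UpperSemicontinuousOn (fun x => v x + w x) U := by
  refine hvu.add' hwu fun x hx => ?_
  exact EReal.continuousAt_add (Or.inl (hv x hx)) (Or.inr (hw x hx))

theorem half_sum_abstract {n : ℕ} (F : Set (Matrix (Fin (n+1)) (Fin (n+1)) ℝ))
    (hG : ∀ A ∈ symInterior F, ∀ B ∈ symInterior F, ∀ t : ℝ, 0 ≤ t → t ≤ 1 →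
      ∀ Q : Matrix (Fin (n+1)) (Fin (n+1)) ℝ, Q.PosSemidef →
        (1 - t) • A + t • B + Q ∈ symInterior F)
    (U : Set (Fin (n+1) → ℝ)) (hU : IsOpen U) (v w : (Fin (n+1) → ℝ) → EReal)
    (hv : IsTypeF F U v) (hw : IsTypeF F U w) :
    IsTypeF F U (fun y => (((1 : ℝ) / 2 : ℝ) : EReal) * (v y + w y)) := by
  have heu : UpperSemicontinuousOn (fun x => v x + w x) U := usc_add hv.1 hw.1 hv.2.1 hw.2.1
  have het : ∀ x ∈ U, v x + w x ≠ ⊤ := fun x hx => EReal.add_ne_top (hv.1 x hx) (hw.1 x hx)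
  refine ⟨?_, ?_, ?_⟩
  · intro x hx
    have := het x hx
    beta_reduce
    generalize v x + w x = e at *
    induction e with
    | top => exact absurd rfl this
    | bot => rw [EReal.coe_mul_bot_of_pos (by norm_num)]; simp
    | coe a => norm_cast; exact EReal.coe_ne_top _
  · intro x hx y hy
    obtain ⟨s, hs1, hs2⟩ := EReal.lt_iff_exists_real_btwn.1 hy
    obtain ⟨r, hr1, hr2⟩ := EReal.lt_iff_exists_real_btwn.1 hs1
    have key : ∀ e : EReal, ∀ r : ℝ, (((1 : ℝ) / 2 : ℝ) : EReal) * e ≤ r ↔ e ≤ ((2 * r : ℝ) : EReal) := by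
      intro e r
      have := ereal_half_le e 0 r
      simpa only [EReal.coe_zero, add_zero, sub_zero] using this
    have h1 : v x + w x < ((2 * s : ℝ) : EReal) := by
      refine ((key _ r).1 hr1.le).trans_lt ?_
      have : r < s := by exact_mod_cast hr2
      norm_cast; linarith
    filter_upwards [heu x hx _ h1] with z hz
    exact ((key _ s).2 hz.le).trans_lt hs2
  intro φ hφ hφF a K hK hKU hbd x1 hx1
  beta_reduce at hbd ⊢
  rw [ereal_half_le]
  by_contra! hlt
  have hbd' : ∀ x ∈ frontier K, v x + w x ≤ ((2 * (a x - φ x) : ℝ) : EReal) :=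
    fun x hx => (ereal_half_le _ _ _).1 (hbd x hx)
  have hφA : ∀ x ∈ U, ContDiffAt ℝ 2 φ x := fun x hx => hφ.contDiffAt (hU.mem_nhds hx)
  obtain ⟨e1, he1⟩ : ∃ e1 : ℝ, v x1 + w x1 = (e1 : EReal) := by
    refine ⟨(v x1 + w x1).toReal, (EReal.coe_toReal (het _ (hKU hx1)) ?_).symm⟩
    intro h; rw [h] at hlt; exact not_lt_bot hlt
  rw [he1] at hlt
  have hlt' : 2 * (a x1 - φ x1) < e1 := by exact_mod_cast hlt
  set γ := e1 - 2 * (a x1 - φ x1) with hγ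
  have hγ0 : 0 < γ := by linarith
  obtain ⟨M, hM0, hM⟩ : ∃ M : ℝ, 0 ≤ M ∧ ∀ x ∈ K, sqd 0 x ≤ M := by
    obtain ⟨y, hy, hmax⟩ := hK.exists_isMaxOn ⟨x1, hx1⟩
      (f := sqd 0) (sqd_contDiff 0 0).continuous.continuousOn
    exact ⟨sqd 0 y, sqd_nonneg _ _, fun x hx => hmax hx⟩
  set ε := γ / (2 * (M + 1)) with hε
  have hε0 : 0 < ε := by positivity
  have hεM : 2 * ε * M < γ := by
    have : 2 * ε * (M + 1) = γ := by rw [hε]; field_simp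
    nlinarith
  have hac : Continuous a := a.continuous_of_finiteDimensional
  set τ : (Fin (n+1) → ℝ) → ℝ := fun x => 2 * ε * sqd 0 x - 2 * (a x - φ x) with hτ
  have hτc : ContinuousOn τ U := by
    have := hφ.continuousOn
    have h2 := (sqd_contDiff (0 : Fin (n+1) → ℝ) 0).continuous
    fun_prop
  have hEu : UpperSemicontinuousOn (fun x => (v x + w x) + (τ x : EReal)) U := by
    refine usc_add het (fun x _ => EReal.coe_ne_top _) heu ?_
    exact (continuous_coe_real_ereal.comp_continuousOn hτc).upperSemicontinuousOn
  obtain ⟨x0, hx0, hmax⟩ := (hEu.mono hKU).exists_isMaxOn ⟨x1, hx1⟩ hK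
  obtain ⟨e0, he0⟩ : ∃ e0 : ℝ, v x0 + w x0 = (e0 : EReal) := by
    refine ⟨(v x0 + w x0).toReal, (EReal.coe_toReal (het _ (hKU hx0)) ?_).symm⟩
    intro h
    have := hmax hx1
    simp only [Set.mem_ofPred_eq, h, he1, EReal.bot_add, le_bot_iff] at this
    norm_cast at this
  have hmax' : ∀ x ∈ K, v x + w x ≤ ((e0 + τ x0 - τ x : ℝ) : EReal) := by
    intro x hx
    have := hmax hx
    simp only [Set.mem_ofPred_eq, he0] at this
    generalize v x + w x = e at *
    induction e with
    | top =>
      rw [EReal.top_add_coe, top_le_iff, ← EReal.coe_add] at this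
      exact absurd this (EReal.coe_ne_top _)
    | bot => exact bot_le
    | coe e => norm_cast at this ⊢; linarith
  have hfr : x0 ∉ frontier K := by
    intro hx
    have h1 := hbd' x0 hx
    rw [he0] at h1
    have h1' : e0 ≤ 2 * (a x0 - φ x0) := by exact_mod_cast h1
    have h2 := hmax' x1 hx1
    rw [he1] at h2
    have h2' : e1 ≤ e0 + τ x0 - τ x1 := by exact_mod_cast h2
    have h3 := mul_le_mul_of_nonneg_left (hM x0 hx0) (by positivity : 0 ≤ 2 * ε)
    have h4 := mul_nonneg (by positivity : 0 ≤ 2 * ε) (sqd_nonneg 0 x1)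
    simp only [hτ] at h2'
    linarith
  have hint : x0 ∈ interior K := by
    by_contra h
    exact hfr ⟨subset_closure hx0, h⟩
  -- separate
  have hdual := hφF x0 (hKU hx0)
  obtain ⟨l, hl, hl1, hlF⟩ := separation F hG (-hessianMatrix φ x0) hdual.1.neg hdual.2
  have hlc : Continuous l := l.continuous_of_finiteDimensional
  have hnear : ∀ᶠ x in nhds x0, - l (hessianMatrix φ x) < l (-hessianMatrix φ x0) + ε * l 1 := by
    have h1 : ContinuousAt (fun x => - l (hessianMatrix φ x)) x0 :=
      (hlc.continuousAt.comp (hess_continuousAt (hφA x0 (hKU hx0)))).neg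
    refine h1.eventually (gt_mem_nhds ?_)
    rw [map_neg]
    have : 0 < ε * l 1 := by positivity
    linarith
  obtain ⟨R, hR, hRs⟩ := sqd_small x0 (Filter.inter_mem (isOpen_interior.mem_nhds hint) hnear)
  have hRK : ∀ x, sqd x0 x ≤ R → x ∈ K := fun x hx => interior_subset (hRs hx).1
  obtain ⟨haff1, haff2⟩ := hess_affine a (e0 + τ x0)
  set χ : (Fin (n+1) → ℝ) → ℝ := fun x => (e0 + τ x0 + 2 * a x) + ((-2) * φ x +
    ((-2 * ε) * sqd 0 x + ε * sqd x0 x)) with hχ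
  have hs1 : ContDiff ℝ 2 (fun x : Fin (n+1) → ℝ => (-2 * ε) * sqd 0 x) :=
    contDiff_const.mul (sqd_contDiff 0 2)
  have hs2 : ContDiff ℝ 2 (fun x : Fin (n+1) → ℝ => ε * sqd x0 x) :=
    contDiff_const.mul (sqd_contDiff x0 2)
  have hφ2 : ∀ x ∈ U, ContDiffAt ℝ 2 (fun x => (-2) * φ x) x := fun x hx =>
    contDiffAt_const.mul (hφA x hx)
  have hfin := touch_lemma hU hv hw l hl hl1 _ hlF x0 R hR (fun x hx => hKU (hRK x hx)) χ
    (fun x hx => haff1.contDiffAt.add ((hφ2 x (hKU (hRK x hx))).add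
      (hs1.contDiffAt.add hs2.contDiffAt)))
    (fun x hx => by
      have hxU := hKU (hRK x hx.le)
      rw [hχ, hess_add haff1.contDiffAt ((hφ2 x hxU).add (hs1.contDiffAt.add hs2.contDiffAt)),
        hess_add (hφ2 x hxU) (hs1.contDiffAt.add hs2.contDiffAt),
        hess_add hs1.contDiffAt hs2.contDiffAt, haff2, hess_smul _ (hφA x hxU),
        hess_smul _ (sqd_contDiff 0 2).contDiffAt, hess_smul _ (sqd_contDiff x0 2).contDiffAt,
        sqd_hess, sqd_hess]
      have h1 : - l (hessianMatrix φ x) < l (-hessianMatrix φ x0) + ε * l 1 := (hRs hx.le).2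
      simp only [map_add, map_smul, smul_eq_mul, map_zero]
      linarith)
    (ε * R / 2) (by positivity)
    (fun x hx => by
      refine (hmax' x (hRK x hx.le)).trans_lt ?_
      have : 0 < ε * R := by positivity
      rw [EReal.coe_lt_coe_iff]
      simp only [hχ, hx, hτ]
      linarith)
  rw [he0] at hfin
  have h0 : sqd x0 x0 = 0 := by simp [sqd]
  have hfin' : e0 < χ x0 := by exact_mod_cast hfin
  simp only [hχ, hτ, h0] at hfin'
  linarith

/-! ### Trace inequalities -/

lemma inner_mulVec_eig {m : ℕ} {A : Matrix (Fin m) (Fin m) ℝ} (hA : A.IsHermitian)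
    (e : Fin m → ℝ) (k : Fin m) :
    (hA.eigenvectorBasis k).ofLp ⬝ᵥ (A *ᵥ e) = hA.eigenvalues k * ((hA.eigenvectorBasis k).ofLp ⬝ᵥ e) := by
  have h1 : Aᵀ = A := by
    have := hA
    rwa [Matrix.IsHermitian, Matrix.conjTranspose_eq_transpose_of_trivial] at this
  rw [Matrix.dotProduct_mulVec, ← Matrix.mulVec_transpose, h1, hA.mulVec_eigenvectorBasis,
    smul_dotProduct, smul_eq_mul]

lemma sum_dot_mul_dot {m : ℕ} (b : OrthonormalBasis (Fin m) ℝ (EuclideanSpace ℝ (Fin m)))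
    (x y : Fin m → ℝ) : ∑ k, ((b k).ofLp ⬝ᵥ x) * ((b k).ofLp ⬝ᵥ y) = x ⬝ᵥ y := by
  have := b.sum_inner_mul_inner (WithLp.toLp 2 x) (WithLp.toLp 2 y)
  simp only [EuclideanSpace.inner_eq_star_dotProduct] at this
  simp only [star_trivial] at this
  rw [dotProduct_comm x y, ← this]
  refine Finset.sum_congr rfl fun k _ => ?_
  rw [dotProduct_comm y]

lemma quad_eq_sum {m : ℕ} {A : Matrix (Fin m) (Fin m) ℝ} (hA : A.IsHermitian) (e : Fin m → ℝ) :
    e ⬝ᵥ (A *ᵥ e) = ∑ k, ((hA.eigenvectorBasis k).ofLp ⬝ᵥ e) ^ 2 * hA.eigenvalues k := by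
  rw [← sum_dot_mul_dot hA.eigenvectorBasis e (A *ᵥ e)]
  refine Finset.sum_congr rfl fun k _ => ?_
  rw [inner_mulVec_eig]; ring

lemma eigbasis_dot_self {m : ℕ} (b : OrthonormalBasis (Fin m) ℝ (EuclideanSpace ℝ (Fin m)))
    (j : Fin m) : (b j).ofLp ⬝ᵥ (b j).ofLp = 1 := by
  have := b.orthonormal.1 j
  have h2 : inner ℝ (b j) (b j) = (1:ℝ) := by
    rw [real_inner_self_eq_norm_sq, this]; norm_num
  rw [EuclideanSpace.inner_eq_star_dotProduct] at h2
  simpa using h2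

lemma quad_eig {m : ℕ} {A : Matrix (Fin m) (Fin m) ℝ} (hA : A.IsHermitian) (k : Fin m) :
    (hA.eigenvectorBasis k).ofLp ⬝ᵥ (A *ᵥ (hA.eigenvectorBasis k).ofLp) = hA.eigenvalues k := by
  rw [inner_mulVec_eig, eigbasis_dot_self, mul_one]

lemma peierls {m : ℕ} {f : ℝ → ℝ} {S : Set ℝ} (hf : ConcaveOn ℝ S f)
    {A : Matrix (Fin m) (Fin m) ℝ} (hA : A.IsHermitian) (hS : ∀ k, hA.eigenvalues k ∈ S)
    (b : OrthonormalBasis (Fin m) ℝ (EuclideanSpace ℝ (Fin m))) :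
    ∑ k, f (hA.eigenvalues k) ≤ ∑ j, f ((b j).ofLp ⬝ᵥ (A *ᵥ (b j).ofLp)) := by
  have h1 : ∀ j, ∑ k, ((hA.eigenvectorBasis k).ofLp ⬝ᵥ (b j).ofLp) ^ 2 * f (hA.eigenvalues k)
      ≤ f ((b j).ofLp ⬝ᵥ (A *ᵥ (b j).ofLp)) := by
    intro j
    rw [quad_eq_sum hA]
    refine hf.le_map_sum (t := Finset.univ)
      (w := fun k => ((hA.eigenvectorBasis k).ofLp ⬝ᵥ (b j).ofLp) ^ 2)
      (p := hA.eigenvalues) (fun k _ => sq_nonneg _) ?_ (fun k _ => hS k)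
    have := sum_dot_mul_dot hA.eigenvectorBasis (b j).ofLp (b j).ofLp
    rw [eigbasis_dot_self] at this
    rw [← this]
    exact Finset.sum_congr rfl fun k _ => by ring
  refine le_trans (le_of_eq ?_) (Finset.sum_le_sum fun j _ => h1 j)
  rw [Finset.sum_comm]
  refine Finset.sum_congr rfl fun k _ => ?_
  rw [← Finset.sum_mul]
  have := sum_dot_mul_dot b (hA.eigenvectorBasis k).ofLp (hA.eigenvectorBasis k).ofLp
  rw [eigbasis_dot_self] at this
  have h2 : ∑ j, ((hA.eigenvectorBasis k).ofLp ⬝ᵥ (b j).ofLp) ^ 2 = 1 := by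
    rw [← this]
    refine Finset.sum_congr rfl fun j _ => ?_
    rw [dotProduct_comm (b j).ofLp]; ring
  rw [h2, one_mul]

lemma trace_concave {m : ℕ} {f : ℝ → ℝ} {S : Set ℝ} (hf : ConcaveOn ℝ S f)
    {A B C : Matrix (Fin m) (Fin m) ℝ} (hA : A.IsHermitian) (hB : B.IsHermitian)
    (hC : C.IsHermitian) (hAS : ∀ k, hA.eigenvalues k ∈ S) (hBS : ∀ k, hB.eigenvalues k ∈ S)
    (s t : ℝ) (hs : 0 ≤ s) (ht : 0 ≤ t)
    (h : ∀ e : Fin m → ℝ, s * f (e ⬝ᵥ (A *ᵥ e)) + t * f (e ⬝ᵥ (B *ᵥ e)) ≤ f (e ⬝ᵥ (C *ᵥ e))) :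
    s * ∑ k, f (hA.eigenvalues k) + t * ∑ k, f (hB.eigenvalues k) ≤ ∑ k, f (hC.eigenvalues k) := by
  have h1 := peierls hf hA hAS hC.eigenvectorBasis
  have h2 := peierls hf hB hBS hC.eigenvectorBasis
  have h3 := mul_le_mul_of_nonneg_left h1 hs
  have h4 := mul_le_mul_of_nonneg_left h2 ht
  refine (add_le_add h3 h4).trans ?_
  rw [Finset.mul_sum, Finset.mul_sum, ← Finset.sum_add_distrib]
  refine Finset.sum_le_sum fun j _ => (h _).trans (le_of_eq ?_)
  rw [quad_eig]

lemma concave_arctan : ConcaveOn ℝ (Set.Ici 0) Real.arctan := by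
  refine AntitoneOn.concaveOn_of_deriv (convex_Ici 0) Real.continuous_arctan.continuousOn
    Real.differentiable_arctan.differentiableOn ?_
  intro x hx y hy hxy
  rw [interior_Ici] at hx hy
  have hx0 : 0 < x := hx
  rw [Real.deriv_arctan]
  simp only
  apply one_div_le_one_div_of_le (by positivity)
  nlinarith

lemma concave_arctan_sub : ConcaveOn ℝ Set.univ (fun x => Real.arctan x - x ^ 2) := by
  have hd : ∀ x : ℝ, HasDerivAt (fun x => Real.arctan x - x ^ 2) (1 / (1 + x ^ 2) - 2 * x) x := by
    intro x
    have := (Real.hasDerivAt_arctan x).fun_sub (hasDerivAt_pow 2 x)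
    simpa using this
  refine AntitoneOn.concaveOn_of_deriv convex_univ
    (fun x _ => (hd x).continuousAt.continuousWithinAt)
    (fun x _ => (hd x).differentiableAt.differentiableWithinAt) ?_
  intro x _ y _ hxy
  rw [(hd x).deriv, (hd y).deriv]
  have h1 : 1 / (1 + y ^ 2) - 1 / (1 + x ^ 2) ≤ 2 * (y - x) := by
    rw [div_sub_div _ _ (by positivity) (by positivity), div_le_iff₀ (by positivity)]
    have h2 : -(x + y) ≤ 2 * ((1 + y^2) * (1 + x^2)) := by
      nlinarith [sq_nonneg (x+1), sq_nonneg (y+1), sq_nonneg (x*y)]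
    nlinarith [mul_le_mul_of_nonneg_left h2 (sub_nonneg.2 hxy)]
  linarith

lemma sum_sq_eig {m : ℕ} {A : Matrix (Fin m) (Fin m) ℝ} (hA : A.IsHermitian) :
    ∑ k, (hA.eigenvalues k) ^ 2 = ∑ i, ∑ j, A i j ^ 2 := by
  have h1 : ∀ k, (hA.eigenvalues k) ^ 2 =
      (A *ᵥ (hA.eigenvectorBasis k).ofLp) ⬝ᵥ (A *ᵥ (hA.eigenvectorBasis k).ofLp) := by
    intro k
    rw [hA.mulVec_eigenvectorBasis, smul_dotProduct, dotProduct_smul, eigbasis_dot_self]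
    simp [sq]
  have h2 : ∀ i, ∑ j, A i j ^ 2 = ∑ k, ((A *ᵥ (hA.eigenvectorBasis k).ofLp) i) ^ 2 := by
    intro i
    have := sum_dot_mul_dot hA.eigenvectorBasis (A i) (A i)
    have h3 : A i ⬝ᵥ A i = ∑ j, A i j ^ 2 := by
      simp [dotProduct, sq]
    rw [← h3, ← this]
    refine Finset.sum_congr rfl fun k _ => ?_
    rw [dotProduct_comm, sq]; rfl
  simp_rw [h2]
  rw [Finset.sum_comm]
  refine Finset.sum_congr rfl fun k _ => ?_
  rw [h1]
  simp [dotProduct, sq]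

lemma symmetrize_herm {m : ℕ} (A : Matrix (Fin m) (Fin m) ℝ) :
    ((1/2 : ℝ) • (A + Aᵀ)).IsHermitian := by
  rw [Matrix.IsHermitian, Matrix.conjTranspose_eq_transpose_of_trivial, Matrix.transpose_smul,
    Matrix.transpose_add, Matrix.transpose_transpose, add_comm Aᵀ A]

lemma angle_concave_aux (m : ℕ) : ConcaveOn ℝ Set.univ (fun A : Fin m → Fin m → ℝ =>
      ∑ k, (Real.arctan ((symmetrize_herm (Matrix.of A)).eigenvalues k) -
        ((symmetrize_herm (Matrix.of A)).eigenvalues k) ^ 2)) := by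
  refine ⟨convex_univ, ?_⟩
  intro A _ B _ s t hs ht hst
  have h1 : ∀ e : Fin m → ℝ, e ⬝ᵥ (((1/2 : ℝ) • (Matrix.of (s • A + t • B) + (Matrix.of (s • A + t • B))ᵀ)) *ᵥ e) =
      s * (e ⬝ᵥ (((1/2 : ℝ) • (Matrix.of A + (Matrix.of A)ᵀ)) *ᵥ e)) +
        t * (e ⬝ᵥ (((1/2 : ℝ) • (Matrix.of B + (Matrix.of B)ᵀ)) *ᵥ e)) := by
    intro e
    have : (1/2 : ℝ) • (Matrix.of (s • A + t • B) + (Matrix.of (s • A + t • B))ᵀ) =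
        s • ((1/2 : ℝ) • (Matrix.of A + (Matrix.of A)ᵀ)) +
          t • ((1/2 : ℝ) • (Matrix.of B + (Matrix.of B)ᵀ)) := by
      ext i j
      simp only [Matrix.smul_apply, Matrix.add_apply, Matrix.transpose_apply, smul_eq_mul,
        Matrix.of_apply, Pi.add_apply, Pi.smul_apply]
      ring
    rw [this]
    generalize (1/2 : ℝ) • (Matrix.of A + (Matrix.of A)ᵀ) = X
    generalize (1/2 : ℝ) • (Matrix.of B + (Matrix.of B)ᵀ) = Y
    rw [Matrix.add_mulVec, Matrix.smul_mulVec, Matrix.smul_mulVec, dotProduct_add,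
      dotProduct_smul, dotProduct_smul, smul_eq_mul, smul_eq_mul]
  have h2 := trace_concave concave_arctan_sub (symmetrize_herm (Matrix.of A))
    (symmetrize_herm (Matrix.of B))
    (symmetrize_herm (Matrix.of (s • A + t • B))) (fun _ => trivial) (fun _ => trivial) s t hs ht
    (by
      intro e
      rw [h1]
      exact concave_arctan_sub.2 (Set.mem_univ _) (Set.mem_univ _) hs ht hst)
  simp only [smul_eq_mul]
  exact h2

lemma angle_continuous_aux (m : ℕ) : Continuous (fun A : Fin m → Fin m → ℝ =>
    ∑ k, Real.arctan ((symmetrize_herm (Matrix.of A)).eigenvalues k)) := by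
  have hcc := (angle_concave_aux m).continuousOn isOpen_univ
  rw [continuousOn_univ] at hcc
  have h2 : Continuous (fun A : Fin m → Fin m → ℝ =>
      ∑ i, ∑ j, (((1/2 : ℝ) • (Matrix.of A + (Matrix.of A)ᵀ)) i j) ^ 2) := by
    simp only [Matrix.smul_apply, Matrix.add_apply, Matrix.transpose_apply, Matrix.of_apply]
    fun_prop
  refine (hcc.add h2).congr fun A => ?_
  rw [Pi.add_apply, ← sum_sq_eig (symmetrize_herm (Matrix.of A)), ← Finset.sum_add_distrib]
  exact Finset.sum_congr rfl fun k _ => by ring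

/-- continuity of the angle along a continuous family of hermitian matrices -/
lemma angle_continuous {m : ℕ} {X : Type*} [TopologicalSpace X]
    (B : X → Matrix (Fin m) (Fin m) ℝ) (hB : ∀ x, (B x).IsHermitian)
    (hc : ∀ i j, Continuous fun x => B x i j) :
    Continuous (fun x => ∑ k, Real.arctan ((hB x).eigenvalues k)) := by
  have h1 : Continuous (fun x => (fun i j => B x i j : Fin m → Fin m → ℝ)) :=
    continuous_pi fun i => continuous_pi fun j => hc i j
  refine ((angle_continuous_aux m).comp h1).congr fun x => ?_
  have h2 : (1/2 : ℝ) • (Matrix.of (fun i j => B x i j) + (Matrix.of (fun i j => B x i j))ᵀ) = B x := by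
    ext i j
    have := (hB x).apply i j
    simp only [star_trivial] at this
    simp only [Matrix.smul_apply, Matrix.add_apply, Matrix.transpose_apply, smul_eq_mul,
        Matrix.of_apply, this]
    ring
  simp only [Function.comp]
  congr! 5

/-! ### The space-time angle as a limit of Lagrangian angles -/

lemma det_one_add_smul_roots {N : ℕ} (M : Matrix (Fin N) (Fin N) ℂ) (a : ℂ) :
    (1 + a • M).det = (M.charpoly.roots.map (fun z => 1 + a * z)).prod := by
  by_cases ha : a = 0
  · simp [ha]
  have h1 : 1 + a • M = (-a) • (Matrix.scalar (Fin N) (-1 / a) - M) := by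
    ext i j
    by_cases hij : i = j
    · subst hij
      simp [Matrix.smul_apply]
      field_simp
      ring
    · simp [Matrix.smul_apply, hij]
  have hs := IsAlgClosed.splits M.charpoly
  rw [h1, Matrix.det_smul, ← Matrix.eval_charpoly, hs.eval_eq_prod_roots,
    (Matrix.charpoly_monic M).leadingCoeff, one_mul, ← Matrix.charpoly_natDegree_eq_dim M,
    hs.natDegree_eq_card_roots]
  generalize M.charpoly.roots = m
  induction m using Multiset.induction_on with
  | empty => simp
  | cons z m ih =>
    rw [Multiset.map_cons, Multiset.prod_cons, Multiset.map_cons, Multiset.prod_cons, ← ih,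
      Multiset.card_cons, pow_succ]
    field_simp
    ring

lemma det_one_add_I_smul {N : ℕ} {B : Matrix (Fin N) (Fin N) ℝ} (hB : B.IsHermitian) :
    (1 + Complex.I • B.map (fun a => (a : ℂ))).det =
      ∏ k, (1 + Complex.I * (hB.eigenvalues k : ℂ)) := by
  rw [det_one_add_smul_roots]
  have h1 : (B.map (fun a => (a : ℂ))).charpoly.roots =
      Finset.univ.val.map (fun k => (hB.eigenvalues k : ℂ)) := by
    have h2 := Matrix.charpoly_map B Complex.ofRealHom
    have h3 : (B.map (fun a => (a : ℂ))) = B.map Complex.ofRealHom := rfl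
    rw [h3, h2, hB.charpoly_eq, Polynomial.map_prod]
    simp only [Polynomial.map_sub, Polynomial.map_X, Polynomial.map_C]
    rw [← Polynomial.roots_multiset_prod_X_sub_C
      (Finset.univ.val.map (fun k => (hB.eigenvalues k : ℂ))), Multiset.map_map]
    rfl
  rw [h1, Multiset.map_map]
  rfl

lemma prod_polar (m : Multiset ℂ) :
    m.prod = (((m.map (fun z => ‖z‖)).prod : ℝ) : ℂ) *
      Complex.exp ((((m.map Complex.arg).sum : ℝ) : ℂ) * Complex.I) := by
  induction m using Multiset.induction_on with
  | empty => simp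
  | cons z m ih =>
    rw [Multiset.prod_cons, ih, Multiset.map_cons, Multiset.map_cons, Multiset.prod_cons,
      Multiset.sum_cons]
    conv_lhs => rw [← Complex.norm_mul_exp_arg_mul_I z]
    push_cast
    rw [add_mul, Complex.exp_add]
    ring

lemma one_add_I_mul_polar (x : ℝ) :
    1 + Complex.I * (x : ℂ) = ((√(1 + x ^ 2) : ℝ) : ℂ) *
      Complex.exp (((Real.arctan x : ℝ) : ℂ) * Complex.I) := by
  have h : √(1 + x ^ 2) ≠ 0 := by positivity
  rw [Complex.exp_mul_I, ← Complex.ofReal_cos, ← Complex.ofReal_sin, Real.cos_arctan,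
    Real.sin_arctan]
  apply Complex.ext
  · simp [h]
  · simp
    field_simp

lemma prod_arctan_polar {N : ℕ} (f : Fin N → ℝ) :
    ∏ k, (1 + Complex.I * (f k : ℂ)) = ((∏ k, √(1 + (f k) ^ 2) : ℝ) : ℂ) *
      Complex.exp (((∑ k, Real.arctan (f k) : ℝ) : ℂ) * Complex.I) := by
  simp_rw [one_add_I_mul_polar]
  rw [Finset.prod_mul_distrib]
  push_cast
  rw [Finset.sum_mul, Complex.exp_sum]

lemma cos_of_polar_eq {r1 r2 g h : ℝ} (h1 : 0 < r1) (h2 : 0 < r2)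
    (e : (r1 : ℂ) * Complex.exp ((g : ℂ) * Complex.I) = (r2 : ℂ) * Complex.exp ((h : ℂ) * Complex.I)) :
    Real.cos (g - h) = 1 := by
  have hn := congrArg (fun z => ‖z‖) e
  simp only [norm_mul, Complex.norm_exp_ofReal_mul_I, mul_one, Complex.norm_real,
    Real.norm_eq_abs, abs_of_pos h1, abs_of_pos h2] at hn
  subst hn
  have e2 := mul_left_cancel₀ (Complex.ofReal_ne_zero.2 h1.ne') e
  rw [Complex.exp_mul_I, Complex.exp_mul_I, ← Complex.ofReal_cos, ← Complex.ofReal_sin,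
    ← Complex.ofReal_cos, ← Complex.ofReal_sin] at e2
  have hre := congrArg Complex.re e2
  have him := congrArg Complex.im e2
  simp [-Complex.ofReal_cos, -Complex.ofReal_sin] at hre him
  rw [Real.cos_sub, hre, him]
  nlinarith [Real.sin_sq_add_cos_sq h]

lemma eq_zero_of_cos_one {f : ℝ → ℝ} (hf : Continuous f) (h0 : f 0 = 0)
    (hc : ∀ s, Real.cos (f s) = 1) (s : ℝ) : f s = 0 := by
  by_contra hne
  have h1 : π ≤ |f s| := by
    by_contra hlt
    push Not at hlt
    have := Real.cos_lt_cos_of_nonneg_of_le_pi (x := 0) (y := |f s|) le_rfl hlt.le (abs_pos.2 hne)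
    rw [Real.cos_abs, hc, Real.cos_zero] at this
    exact lt_irrefl _ this
  have hcon : Continuous fun s => |f s| := hf.abs
  obtain ⟨s', hs'⟩ : ∃ s', |f s'| = π := by
    have := mem_range_of_exists_le_of_exists_ge hcon (c := π)
      ⟨0, by rw [h0, abs_zero]; exact Real.pi_pos.le⟩ ⟨s, h1⟩
    exact this
  have := hc s'
  rw [← Real.cos_abs, hs', Real.cos_pi] at this
  norm_num at this

lemma cmat_quad_re {n : ℕ} {A : Matrix (Fin (n+1)) (Fin (n+1)) ℝ} (hA : A.IsSymm)
    (x : Fin (n+1) → ℂ) :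
    (star x ⬝ᵥ (cmat A *ᵥ x)).re = ∑ i, if i = 0 then 0 else ‖x i‖ ^ 2 := by
  have h1 : star x ⬝ᵥ (cmat A *ᵥ x) = (∑ i, if i = 0 then 0 else ((‖x i‖ ^ 2 : ℝ) : ℂ)) +
      Complex.I * (star x ⬝ᵥ (A.map (fun a => (a : ℂ)) *ᵥ x)) := by
    rw [cmat, Matrix.add_mulVec, dotProduct_add, Matrix.smul_mulVec, dotProduct_smul, smul_eq_mul]
    congr 1
    rw [dotProduct]
    refine Finset.sum_congr rfl fun i _ => ?_
    rw [Inmat, Matrix.mulVec_diagonal]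
    split_ifs
    · simp
    · simp only [Pi.star_apply, one_mul]
      rw [Complex.star_def, Complex.conj_mul']
      push_cast
      rfl
  have h2 : (star x ⬝ᵥ (A.map (fun a => (a : ℂ)) *ᵥ x)).im = 0 := by
    rw [← Complex.conj_eq_iff_im]
    simp only [dotProduct, Matrix.mulVec, Finset.mul_sum, map_sum]
    rw [Finset.sum_comm]
    refine Finset.sum_congr rfl fun i _ => Finset.sum_congr rfl fun j _ => ?_
    simp only [Pi.star_apply, Matrix.map_apply, map_mul, Complex.star_def, Complex.conj_conj,
      Complex.conj_ofReal]
    rw [hA.apply i j]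
    ring
  rw [h1, Complex.add_re, Complex.mul_re, Complex.I_re, Complex.I_im, h2]
  simp only [zero_mul, mul_zero, sub_zero, add_zero, Complex.re_sum]
  refine Finset.sum_congr rfl fun i _ => ?_
  split_ifs
  · rfl
  · rw [Complex.ofReal_re]

lemma root_re_nonneg {n : ℕ} {A : Matrix (Fin (n+1)) (Fin (n+1)) ℝ} (hA : A.IsSymm) {z : ℂ}
    (hz : z ∈ (cmat A).charpoly.roots) : 0 ≤ z.re := by
  have h1 := Polynomial.isRoot_of_mem_roots hz
  rw [Polynomial.IsRoot, Matrix.eval_charpoly] at h1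
  obtain ⟨x, hx0, hx⟩ := Matrix.exists_mulVec_eq_zero_iff.2 h1
  have h2 : cmat A *ᵥ x = z • x := by
    rw [Matrix.sub_mulVec, sub_eq_zero] at hx
    rw [← hx]
    ext i
    simp [Matrix.scalar_apply, Matrix.mulVec_diagonal]
  have h3 := cmat_quad_re hA x
  rw [h2, dotProduct_smul] at h3
  have h4 : star x ⬝ᵥ x = ((∑ i, ‖x i‖ ^ 2 : ℝ) : ℂ) := by
    rw [dotProduct]
    push_cast
    refine Finset.sum_congr rfl fun i _ => ?_
    rw [Pi.star_apply, Complex.star_def, Complex.conj_mul']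
  rw [h4, smul_eq_mul, Complex.re_mul_ofReal] at h3
  have h5 : 0 < ∑ i, ‖x i‖ ^ 2 := by
    obtain ⟨i, hi⟩ := Function.ne_iff.1 hx0
    have hi' : x i ≠ 0 := hi
    exact Finset.sum_pos' (fun _ _ => by positivity) ⟨i, Finset.mem_univ _, by positivity⟩
  have h6 : 0 ≤ ∑ i, (if i = 0 then 0 else ‖x i‖ ^ 2) :=
    Finset.sum_nonneg fun i _ => by split_ifs <;> positivity
  rw [← h3] at h6
  exact nonneg_of_mul_nonneg_left h6 h5

lemma cmat_det_ne_zero {n : ℕ} {A : Matrix (Fin (n+1)) (Fin (n+1)) ℝ} (hA : A.IsSymm)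
    (h00 : A 0 0 ≠ 0) : (cmat A).det ≠ 0 := by
  intro h
  obtain ⟨x, hx0, hx⟩ := Matrix.exists_mulVec_eq_zero_iff.2 h
  have h3 := cmat_quad_re hA x
  rw [hx, dotProduct_zero, Complex.zero_re] at h3
  have h4 := (Finset.sum_eq_zero_iff_of_nonneg
    (fun i _ => by split_ifs <;> positivity)).1 h3.symm
  have h5 : ∀ i, i ≠ 0 → x i = 0 := by
    intro i hi
    have := h4 i (Finset.mem_univ _)
    rw [if_neg hi] at this
    simpa using this
  have h6 := congrFun hx 0
  rw [Matrix.mulVec, dotProduct, Finset.sum_eq_single 0 (fun j _ hj => by rw [h5 j hj, mul_zero])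
    (fun h => absurd (Finset.mem_univ _) h)] at h6
  have h7 : x 0 = 0 := by
    simpa [cmat, Inmat, h00] using h6
  apply hx0
  ext i
  by_cases hi : i = 0
  · rw [hi, h7]; rfl
  · rw [h5 i hi]; rfl

/-! ### The approximating family -/

/-- diagonal weights -/
noncomputable def dd {n : ℕ} (s : ℝ) (i : Fin (n+1)) : ℝ := if i = 0 then 1 else 1 + |s|

/-- scaling factors -/
noncomputable def rho {n : ℕ} (s : ℝ) (i : Fin (n+1)) : ℝ := √(|s| / dd s i)

/-- the real symmetric matrix whose angle approximates the space-time angle -/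
noncomputable def Bm {n : ℕ} (s : ℝ) (A : Matrix (Fin (n+1)) (Fin (n+1)) ℝ) :
    Matrix (Fin (n+1)) (Fin (n+1)) ℝ :=
  Matrix.of fun i j => rho s i * A i j * rho s j

lemma dd_pos {n : ℕ} (s : ℝ) (i : Fin (n+1)) : 0 < dd s i := by
  unfold dd; split_ifs <;> positivity

lemma rho_cont {n : ℕ} (i : Fin (n+1)) : Continuous fun s => rho s i := by
  unfold rho
  refine Real.continuous_sqrt.comp (Continuous.div continuous_abs ?_ fun s => (dd_pos s i).ne')
  unfold dd
  split_ifs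
  · exact continuous_const
  · fun_prop

lemma sqrt_dd_mul_rho {n : ℕ} (s : ℝ) (i : Fin (n+1)) : √(dd s i) * rho s i = √|s| := by
  rw [rho, ← Real.sqrt_mul (dd_pos s i).le, mul_div_cancel₀ _ (dd_pos s i).ne']

lemma Bm_herm {n : ℕ} (s : ℝ) {A : Matrix (Fin (n+1)) (Fin (n+1)) ℝ} (hA : A.IsSymm) :
    (Bm s A).IsHermitian := by
  ext i j
  simp only [Matrix.conjTranspose_apply, Bm, Matrix.of_apply, star_trivial]
  rw [hA.apply i j]
  ring

lemma Bm_quad {n : ℕ} (s : ℝ) (A : Matrix (Fin (n+1)) (Fin (n+1)) ℝ) (e : Fin (n+1) → ℝ) :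
    e ⬝ᵥ (Bm s A *ᵥ e) = (fun i => rho s i * e i) ⬝ᵥ (A *ᵥ (fun i => rho s i * e i)) := by
  simp only [dotProduct, Matrix.mulVec, Finset.mul_sum, Bm, Matrix.of_apply]
  refine Finset.sum_congr rfl fun i _ => Finset.sum_congr rfl fun j _ => ?_
  ring

/-- the approximating angle -/
noncomputable def hang {n : ℕ} {A : Matrix (Fin (n+1)) (Fin (n+1)) ℝ} (hA : A.IsSymm) (s : ℝ) : ℝ :=
  ∑ k, Real.arctan ((Bm_herm s hA).eigenvalues k)

lemma hang_cont {n : ℕ} {A : Matrix (Fin (n+1)) (Fin (n+1)) ℝ} (hA : A.IsSymm) :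
    Continuous (hang hA) := by
  refine angle_continuous (fun s => Bm s A) (fun s => Bm_herm s hA) fun i j => ?_
  simp only [Bm, Matrix.of_apply]
  exact ((rho_cont i).mul continuous_const).mul (rho_cont j)

lemma hang_zero {n : ℕ} {A : Matrix (Fin (n+1)) (Fin (n+1)) ℝ} (hA : A.IsSymm) :
    hang hA 0 = 0 := by
  rw [hang]
  refine Finset.sum_eq_zero fun k _ => ?_
  rw [← quad_eig (Bm_herm 0 hA), Bm_quad]
  simp [rho, dotProduct]

lemma det_factor {n : ℕ} {A : Matrix (Fin (n+1)) (Fin (n+1)) ℝ} (s : ℝ) :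
    (1 + ((|s| : ℝ) : ℂ) • cmat A).det = ((∏ i : Fin (n+1), dd s i : ℝ) : ℂ) *
      (1 + Complex.I • (Bm s A).map (fun a => (a : ℂ))).det := by
  have h1 : 1 + ((|s| : ℝ) : ℂ) • cmat A =
      Matrix.diagonal (fun i => ((√(dd s i) : ℝ) : ℂ)) *
        (1 + Complex.I • (Bm s A).map (fun a => (a : ℂ))) *
        Matrix.diagonal (fun i => ((√(dd s i) : ℝ) : ℂ)) := by
    ext i j
    rw [Matrix.mul_diagonal, Matrix.diagonal_mul]
    have h2 : ((√(dd s i) : ℝ) : ℂ) * (rho s i * A i j * rho s j : ℝ) * ((√(dd s j) : ℝ) : ℂ)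
        = ((|s| : ℝ) : ℂ) * (A i j : ℂ) := by
      have : √(dd s i) * (rho s i * A i j * rho s j) * √(dd s j) = |s| * A i j := by
        calc _ = (√(dd s i) * rho s i) * A i j * (√(dd s j) * rho s j) := by ring
          _ = (√|s| * √|s|) * A i j := by rw [sqrt_dd_mul_rho, sqrt_dd_mul_rho]; ring
          _ = _ := by rw [Real.mul_self_sqrt (abs_nonneg s)]
      exact_mod_cast congrArg (fun x : ℝ => (x : ℂ)) this
    simp only [Matrix.add_apply, Matrix.smul_apply, cmat, Inmat, Matrix.map_apply, smul_eq_mul, Bm,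
      Matrix.of_apply]
    rw [mul_add, mul_add, add_mul]
    have h3 : ((√(dd s i) : ℝ) : ℂ) * (Complex.I * ((rho s i * A i j * rho s j : ℝ) : ℂ)) *
        ((√(dd s j) : ℝ) : ℂ) = ((|s| : ℝ) : ℂ) * (Complex.I * (A i j : ℂ)) := by
      linear_combination Complex.I * h2
    rw [h3, ← add_assoc]
    congr 1
    by_cases hij : i = j
    · subst hij
      have h4 : ((√(dd s i) : ℝ) : ℂ) * ((√(dd s i) : ℝ) : ℂ) = ((dd s i : ℝ) : ℂ) := by
        rw [← Complex.ofReal_mul, Real.mul_self_sqrt (dd_pos s i).le]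
      rw [Matrix.one_apply_eq, Matrix.diagonal_apply_eq, mul_one, h4, dd]
      split_ifs <;> simp
    · rw [Matrix.one_apply_ne hij, Matrix.diagonal_apply_ne _ hij]
      simp
  rw [h1, Matrix.det_mul, Matrix.det_mul, Matrix.det_diagonal]
  have h5 : ((∏ i : Fin (n+1), dd s i : ℝ) : ℂ) = (∏ i : Fin (n+1), ((√(dd s i) : ℝ) : ℂ)) *
      (∏ i : Fin (n+1), ((√(dd s i) : ℝ) : ℂ)) := by
    rw [← Finset.prod_mul_distrib]
    push_cast
    refine Finset.prod_congr rfl fun i _ => ?_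
    rw [← Complex.ofReal_mul, Real.mul_self_sqrt (dd_pos s i).le]
  rw [h5]
  ring

lemma root_slit {n : ℕ} {A : Matrix (Fin (n+1)) (Fin (n+1)) ℝ} (hA : A.IsSymm) {z : ℂ}
    (hz : z ∈ (cmat A).charpoly.roots) (s : ℝ) : 0 < (1 + ((|s| : ℝ) : ℂ) * z).re := by
  rw [Complex.add_re, Complex.one_re, Complex.re_ofReal_mul]
  have := mul_nonneg (abs_nonneg s) (root_re_nonneg hA hz)
  linarith

lemma arg_sum_eq_hang {n : ℕ} {A : Matrix (Fin (n+1)) (Fin (n+1)) ℝ} (hA : A.IsSymm) (s : ℝ) :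
    ((cmat A).charpoly.roots.map (fun z => Complex.arg (1 + ((|s| : ℝ) : ℂ) * z))).sum =
      hang hA s := by
  have hg : Continuous fun s : ℝ =>
      ((cmat A).charpoly.roots.map (fun z => Complex.arg (1 + ((|s| : ℝ) : ℂ) * z))).sum := by
    refine continuous_multiset_sum _ fun z hz => ?_
    rw [continuous_iff_continuousAt]
    intro s
    refine ContinuousAt.comp' (f := fun s : ℝ => 1 + ((|s| : ℝ) : ℂ) * z)
      (Complex.continuousAt_arg (Or.inl (root_slit hA hz s))) ?_
    fun_prop
  rw [← sub_eq_zero]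
  refine eq_zero_of_cos_one (hg.sub (hang_cont hA)) ?_ (fun s => ?_) s
  · simp [hang_zero]
  · have h1 := det_factor (A := A) s
    rw [det_one_add_I_smul (Bm_herm s hA), prod_arctan_polar, det_one_add_smul_roots,
      prod_polar, ← mul_assoc, ← Complex.ofReal_mul, Multiset.map_map, Multiset.map_map] at h1
    refine cos_of_polar_eq ?_ ?_ h1
    · refine Multiset.prod_pos fun a ha => ?_
      obtain ⟨z, hz, rfl⟩ := Multiset.mem_map.1 ha
      have := root_slit hA hz s
      simp only [Function.comp]
      rw [norm_pos_iff]
      intro h0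
      rw [h0] at this
      simp at this
    · exact mul_pos (Finset.prod_pos fun i _ => dd_pos s i)
        (Finset.prod_pos fun i _ => by positivity)

lemma hang_tendsto {n : ℕ} {A : Matrix (Fin (n+1)) (Fin (n+1)) ℝ} (hA : A.IsSymm)
    (h00 : A 0 0 ≠ 0) : Tendsto (hang hA) atTop (nhds (spaceTimeAngle A)) := by
  have hdet := cmat_det_ne_zero hA h00
  rw [spaceTimeAngle, if_neg hdet]
  have h1 : hang hA = fun s =>
    ((cmat A).charpoly.roots.map (fun z => Complex.arg (1 + ((|s| : ℝ) : ℂ) * z))).sum :=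
    funext fun s => (arg_sum_eq_hang hA s).symm
  rw [h1]
  refine tendsto_multiset_sum _ fun z hz => ?_
  have hz0 : z ≠ 0 := by
    rintro rfl
    apply hdet
    rw [Matrix.det_eq_prod_roots_charpoly]
    exact Multiset.prod_eq_zero hz
  have hslit : z ∈ Complex.slitPlane := by
    rw [Complex.mem_slitPlane_iff]
    rcases (root_re_nonneg hA hz).lt_or_eq with h | h
    · exact Or.inl h
    · right
      intro him
      exact hz0 (Complex.ext h.symm him)
  have h2 : Tendsto (fun s : ℝ => ((s⁻¹ : ℝ) : ℂ) + z) atTop (nhds z) := by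
    have h3 : Tendsto (fun s : ℝ => ((s⁻¹ : ℝ) : ℂ)) atTop (nhds ((0:ℝ) : ℂ)) :=
      (Complex.continuous_ofReal.tendsto 0).comp tendsto_inv_atTop_zero
    have := h3.add_const z
    simpa using this
  refine ((Complex.continuousAt_arg hslit).tendsto.comp h2).congr' ?_
  filter_upwards [eventually_gt_atTop 0] with s hs
  have h4 : 1 + ((|s| : ℝ) : ℂ) * z = (s : ℂ) * (((s⁻¹ : ℝ) : ℂ) + z) := by
    rw [abs_of_pos hs, mul_add, ← Complex.ofReal_mul, mul_inv_cancel₀ hs.ne', Complex.ofReal_one]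
  rw [h4, Complex.arg_real_mul _ hs]
  rfl

lemma psd_of_angle {n : ℕ} {A : Matrix (Fin (n+1)) (Fin (n+1)) ℝ} (hA : A.IsSymm)
    (h00 : A 0 0 ≠ 0) (hang_ge : (n : ℝ) * π / 2 ≤ spaceTimeAngle A) : A.PosSemidef := by
  have hH : A.IsHermitian := by
    rw [Matrix.IsHermitian, Matrix.conjTranspose_eq_transpose_of_trivial]; exact hA
  refine Matrix.PosSemidef.of_dotProduct_mulVec_nonneg hH fun x => ?_
  rw [star_trivial]
  by_contra hneg
  push Not at hneg
  have hx : 0 < x ⬝ᵥ x := by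
    rcases (show 0 ≤ x ⬝ᵥ x from Finset.sum_nonneg fun i _ => mul_self_nonneg _).lt_or_eq with h | h
    · exact h
    · have := dotProduct_self_eq_zero.1 h.symm
      rw [this] at hneg
      simp at hneg
  set δ : ℝ := -(x ⬝ᵥ (A *ᵥ x)) / (4 * (x ⬝ᵥ x)) with hδ
  have hδ0 : 0 < δ := div_pos (by linarith) (by linarith)
  have key : ∀ s : ℝ, 1 ≤ s → hang hA s ≤ n * (π / 2) - Real.arctan δ := by
    intro s hs
    have hs0 : 0 < s := by linarith
    have hex : ∃ k, (Bm_herm s hA).eigenvalues k ≤ -δ := by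
      by_contra hcon
      push Not at hcon
      set y : Fin (n+1) → ℝ := fun i => √(dd s i) * x i with hy
      have h1 : y ⬝ᵥ (Bm s A *ᵥ y) = s * (x ⬝ᵥ (A *ᵥ x)) := by
        rw [Bm_quad]
        have : (fun i => rho s i * y i) = √s • x := by
          ext i
          have := sqrt_dd_mul_rho s i
          rw [abs_of_pos hs0] at this
          simp only [hy, Pi.smul_apply, smul_eq_mul]
          rw [← this]; ring
        rw [this, Matrix.mulVec_smul, smul_dotProduct, dotProduct_smul, smul_eq_mul, smul_eq_mul,
          ← mul_assoc, Real.mul_self_sqrt hs0.le]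
      have h2 : -δ * (y ⬝ᵥ y) ≤ y ⬝ᵥ (Bm s A *ᵥ y) := by
        rw [quad_eq_sum (Bm_herm s hA), ← sum_dot_mul_dot (Bm_herm s hA).eigenvectorBasis y y,
          Finset.mul_sum]
        refine Finset.sum_le_sum fun k _ => ?_
        rw [← sq, mul_comm]
        exact mul_le_mul_of_nonneg_left (hcon k).le (sq_nonneg _)
      have h3 : y ⬝ᵥ y ≤ (2 * s) * (x ⬝ᵥ x) := by
        simp only [dotProduct, Finset.mul_sum]
        refine Finset.sum_le_sum fun i _ => ?_
        have h4 : y i * y i = dd s i * (x i * x i) := by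
          simp only [hy]
          calc _ = (√(dd s i) * √(dd s i)) * (x i * x i) := by ring
            _ = _ := by rw [Real.mul_self_sqrt (dd_pos s i).le]
        rw [h4]
        refine mul_le_mul_of_nonneg_right ?_ (mul_self_nonneg _)
        unfold dd
        rw [abs_of_pos hs0]
        split_ifs <;> linarith
      have h5 : δ * (4 * (x ⬝ᵥ x)) = -(x ⬝ᵥ (A *ᵥ x)) := by
        rw [hδ, div_mul_cancel₀ _ (by positivity)]
      have h6 := mul_le_mul_of_nonneg_left h3 hδ0.le
      have h7 : s * (x ⬝ᵥ (A *ᵥ x)) < 0 := mul_neg_of_pos_of_neg hs0 hneg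
      have h8 : δ * (2 * s * (x ⬝ᵥ x)) = -(s * (x ⬝ᵥ (A *ᵥ x))) / 2 := by
        linear_combination (s / 2) * h5
      linarith
    obtain ⟨k, hk⟩ := hex
    rw [hang, ← Finset.add_sum_erase _ _ (Finset.mem_univ k)]
    have h1 : Real.arctan ((Bm_herm s hA).eigenvalues k) ≤ -Real.arctan δ := by
      rw [← Real.arctan_neg]
      exact Real.arctan_strictMono.monotone hk
    have h2 : ∑ j ∈ Finset.univ.erase k, Real.arctan ((Bm_herm s hA).eigenvalues j) ≤ n * (π/2) := by
      refine (Finset.sum_le_card_nsmul _ _ (π/2) fun j _ => (Real.arctan_lt_pi_div_two _).le).trans ?_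
      rw [Finset.card_erase_of_mem (Finset.mem_univ k)]
      simp
    linarith
  have hlim := le_of_tendsto (hang_tendsto hA h00) (by
    filter_upwards [eventually_ge_atTop 1] with s hs using key s hs)
  have := Real.arctan_pos.2 hδ0
  linarith

/-! ### Convexity of the top branch -/

lemma Bm_psd {n : ℕ} (s : ℝ) {A : Matrix (Fin (n+1)) (Fin (n+1)) ℝ} (hA : A.IsSymm)
    (hp : A.PosSemidef) (k) : (Bm_herm s hA).eigenvalues k ∈ Set.Ici (0:ℝ) := by
  rw [← quad_eig (Bm_herm s hA) k, Bm_quad]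
  have := hp.dotProduct_mulVec_nonneg
    (fun i => rho s i * ((Bm_herm s hA).eigenvectorBasis k).ofLp i)
  rw [star_trivial] at this
  exact this

lemma angle_concave {n : ℕ} {A B C : Matrix (Fin (n+1)) (Fin (n+1)) ℝ} (hA : A.IsSymm)
    (hB : B.IsSymm) (hC : C.IsSymm) (hAp : A.PosSemidef) (hBp : B.PosSemidef)
    (hA0 : A 0 0 ≠ 0) (hB0 : B 0 0 ≠ 0) (hC0 : C 0 0 ≠ 0) (t : ℝ) (h0 : 0 ≤ t) (h1 : t ≤ 1)
    (Q : Matrix (Fin (n+1)) (Fin (n+1)) ℝ) (hQ : Q.PosSemidef)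
    (hCeq : C = (1 - t) • A + t • B + Q) :
    (1 - t) * spaceTimeAngle A + t * spaceTimeAngle B ≤ spaceTimeAngle C := by
  refine le_of_tendsto_of_tendsto' (((hang_tendsto hA hA0).const_mul (1 - t)).add
    ((hang_tendsto hB hB0).const_mul t)) (hang_tendsto hC hC0) fun s => ?_
  refine trace_concave concave_arctan (Bm_herm s hA) (Bm_herm s hB) (Bm_herm s hC)
    (Bm_psd s hA hAp) (Bm_psd s hB hBp) (1 - t) t (by linarith) h0 fun e => ?_
  rw [Bm_quad, Bm_quad, Bm_quad]
  generalize (fun i => rho s i * e i) = y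
  have hA1 := hAp.dotProduct_mulVec_nonneg y
  have hB1 := hBp.dotProduct_mulVec_nonneg y
  have hQ1 := hQ.dotProduct_mulVec_nonneg y
  rw [star_trivial] at hA1 hB1 hQ1
  have h2 : y ⬝ᵥ (C *ᵥ y) =
      ((1 - t) * (y ⬝ᵥ (A *ᵥ y)) + t * (y ⬝ᵥ (B *ᵥ y))) + y ⬝ᵥ (Q *ᵥ y) := by
    rw [hCeq, Matrix.add_mulVec, Matrix.add_mulVec, Matrix.smul_mulVec, Matrix.smul_mulVec,
      dotProduct_add, dotProduct_add, dotProduct_smul, dotProduct_smul, smul_eq_mul, smul_eq_mul]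
  have h3 := concave_arctan.2 (Set.mem_Ici.2 hA1) (Set.mem_Ici.2 hB1)
    (sub_nonneg.2 h1) h0 (sub_add_cancel 1 t)
  simp only [smul_eq_mul] at h3
  refine h3.trans (Real.arctan_strictMono.monotone ?_)
  rw [h2]
  linarith

lemma psd_of_interior {n : ℕ} {c : ℝ} (hc : (n : ℝ) * π / 2 ≤ c)
    {A : Matrix (Fin (n+1)) (Fin (n+1)) ℝ} (hA : A ∈ symInterior (calF n c)) :
    A.IsSymm ∧ A.PosSemidef ∧ 0 < A 0 0 ∧ c ≤ spaceTimeAngle A := by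
  have hs := hA.1
  have hc1 : Tendsto (fun η : ℝ => A - η • (1 : Matrix (Fin (n+1)) (Fin (n+1)) ℝ)) (nhds 0)
      (nhds A) := by
    have : Continuous (fun η : ℝ => A - η • (1 : Matrix (Fin (n+1)) (Fin (n+1)) ℝ)) := by fun_prop
    have := this.tendsto 0
    simpa using this
  have h1 := (hc1.eventually hA.2).filter_mono (nhdsWithin_le_nhds (s := Set.Ioi 0))
  have h2 : ∀ᶠ η : ℝ in nhdsWithin 0 (Set.Ioi 0), η ≠ A 0 0 := by
    by_cases h : A 0 0 = 0
    · filter_upwards [self_mem_nhdsWithin] with η hη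
      rw [h]
      exact (Set.mem_Ioi.1 hη).ne'
    · exact (isOpen_ne.eventually_mem (Ne.symm h)).filter_mono nhdsWithin_le_nhds
  obtain ⟨η, ⟨hη1, hη2⟩, hη⟩ := ((h1.and h2).and self_mem_nhdsWithin).exists
  have hη0 : 0 < η := hη
  have hsym : (A - η • (1 : Matrix (Fin (n+1)) (Fin (n+1)) ℝ)).IsSymm :=
    hs.sub (Matrix.isSymm_one.smul η)
  have hm := hη1 hsym
  have hp := psd_of_angle hsym (by
    simp only [Matrix.sub_apply, Matrix.smul_apply, Matrix.one_apply_eq, smul_eq_mul, mul_one]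
    exact sub_ne_zero.2 (Ne.symm hη2)) (hc.trans hm.2)
  have hAp : A.PosSemidef := by
    have := hp.add (Matrix.PosSemidef.one.smul hη0.le)
    simpa using this
  have hd := hp.diag_nonneg (i := 0)
  simp only [Matrix.sub_apply, Matrix.smul_apply, Matrix.one_apply_eq, smul_eq_mul, mul_one] at hd
  exact ⟨hs, hAp, by linarith, (hA.2.self_of_nhds hs).2⟩

lemma calF_hG {n : ℕ} {c : ℝ} (hc : (n : ℝ) * π / 2 ≤ c) :
    ∀ A ∈ symInterior (calF n c), ∀ B ∈ symInterior (calF n c), ∀ t : ℝ, 0 ≤ t → t ≤ 1 →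
      ∀ Q : Matrix (Fin (n+1)) (Fin (n+1)) ℝ, Q.PosSemidef →
        (1 - t) • A + t • B + Q ∈ symInterior (calF n c) := by
  intro A hA B hB t h0 h1 Q hQ
  have hQs : Q.IsSymm := by
    have := hQ.1
    rwa [Matrix.IsHermitian, Matrix.conjTranspose_eq_transpose_of_trivial] at this
  have hCs : ((1 - t) • A + t • B + Q).IsSymm := ((hA.1.smul _).add (hB.1.smul _)).add hQs
  refine ⟨hCs, ?_⟩
  set C := (1 - t) • A + t • B + Q with hC
  have ht : ∀ X : Matrix (Fin (n+1)) (Fin (n+1)) ℝ,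
      Tendsto (fun C' => X + (C' - C)) (nhds C) (nhds X) := by
    intro X
    have : Continuous (fun C' => X + (C' - C)) := by fun_prop
    have := this.tendsto C
    simpa using this
  filter_upwards [(ht A).eventually (symInterior_open _ A hA),
    (ht B).eventually (symInterior_open _ B hB)] with C' hA' hB' hC's
  obtain ⟨a1, a2, a3, a4⟩ := psd_of_interior hc (hA' (hA.1.add (hC's.sub hCs)))
  obtain ⟨b1, b2, b3, b4⟩ := psd_of_interior hc (hB' (hB.1.add (hC's.sub hCs)))
  have hCeq : C' = (1 - t) • (A + (C' - C)) + t • (B + (C' - C)) + Q := by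
    rw [hC]
    module
  have hC0 : 0 < C' 0 0 := by
    have h2 := congrFun (congrFun hCeq 0) 0
    have h3 : C' 0 0 = (1 - t) * (A + (C' - C)) 0 0 + t * (B + (C' - C)) 0 0 + Q 0 0 := h2
    have h4 := hQ.diag_nonneg (i := 0)
    rw [h3]
    rcases h0.lt_or_eq with h | h
    · have := mul_pos h b3
      have := mul_nonneg (sub_nonneg.2 h1) a3.le
      linarith
    · rw [← h]
      linarith
  refine ⟨hC's, ?_⟩
  have h5 := angle_concave a1 b1 hC's a2 b2 a3.ne' b3.ne' hC0.ne' t h0 h1 Q hQ hCeq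
  refine le_trans ?_ h5
  nlinarith [mul_le_mul_of_nonneg_left a4 (sub_nonneg.2 h1), mul_le_mul_of_nonneg_left b4 h0]

/-- Let `c ∈ [nπ/2, (n+1)π/2)`, `I ⊂ ℝ` an open interval and `D ⊂ ℝⁿ` a bounded domain.
If `v, w ∈ ℱ_c(I × D)` then `(v + w)/2 ∈ ℱ_c(I × D)`. -/
theorem half_sum_typeF (n : ℕ) (c : ℝ)
    (hc : (n : ℝ) * π / 2 ≤ c) (hc' : c < ((n : ℝ) + 1) * π / 2)
    (I : Set ℝ) (hIopen : IsOpen I) (hIconv : Convex ℝ I) (hIne : I.Nonempty)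
    (D : Set (Fin n → ℝ)) (hDopen : IsOpen D) (hDconn : IsConnected D)
    (hDbdd : Bornology.IsBounded D)
    (v w : (Fin (n+1) → ℝ) → EReal)
    (hv : IsTypeF (calF n c) {y | y 0 ∈ I ∧ Fin.tail y ∈ D} v)
    (hw : IsTypeF (calF n c) {y | y 0 ∈ I ∧ Fin.tail y ∈ D} w) :
    IsTypeF (calF n c) {y | y 0 ∈ I ∧ Fin.tail y ∈ D}
      (fun y => (((1 : ℝ) / 2 : ℝ) : EReal) * (v y + w y)) := by
  refine half_sum_abstract (calF n c) (calF_hG hc) _ ?_ v w hv hw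
  have h1 : Continuous fun y : Fin (n+1) → ℝ => y 0 := continuous_apply 0
  have h2 : Continuous fun y : Fin (n+1) → ℝ => (Fin.tail y : Fin n → ℝ) :=
    continuous_pi fun i => continuous_apply i.succ
  exact (hIopen.preimage h1).inter (hDopen.preimage h2)
end

section
/- Let c ∈ [nπ/2, (n+1)π/2), let D ⊂ ℝⁿ be a bounded domain and I ⊂ ℝ an open interval. If h ∈ F_{c−π/2}(D) is continuous on D, then the function w(t, x) := h(x), constant in t, belongs to ℱ_c(I × D). -/
open Real Filter Matrix

/-! ### Matrix part: the formula for the space-time angle -/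

lemma cst_roots_prod {m : ℕ} (f : Fin m → ℂ) :
    (∏ j, (Polynomial.X - Polynomial.C (f j))).roots = Finset.univ.val.map f := by
  have := Polynomial.roots_multiset_prod_X_sub_C (Finset.univ.val.map f)
  rw [Multiset.map_map] at this
  exact this

lemma cst_det_affine {m : ℕ} (M : Matrix (Fin m) (Fin m) ℂ) (a b : ℂ) :
    (a • (1 : Matrix (Fin m) (Fin m) ℂ) + b • M).det
      = (M.charpoly.roots.map (fun z => a + b * z)).prod := by
  have hcard : Multiset.card M.charpoly.roots = m := by
    rw [← (IsAlgClosed.splits M.charpoly).natDegree_eq_card_roots]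
    simp [Matrix.charpoly_natDegree_eq_dim]
  rcases eq_or_ne b 0 with rfl | hb
  · simp [hcard]
  · have h1 : a • (1 : Matrix (Fin m) (Fin m) ℂ) + b • M
        = (-b) • (Matrix.scalar (Fin m) (-(a / b)) - M) := by
      ext i j
      by_cases hij : i = j
      · subst hij; simp; field_simp; ring
      · simp [hij]
    have h2 : M.charpoly = (M.charpoly.roots.map (fun z => Polynomial.X - Polynomial.C z)).prod :=
      (IsAlgClosed.splits M.charpoly).eq_prod_roots_of_monic (Matrix.charpoly_monic M)
    rw [h1, Matrix.det_smul, ← Matrix.eval_charpoly]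
    conv_lhs => rw [h2]
    rw [Polynomial.eval_multiset_prod, Multiset.map_map]
    have h3 : (-b) ^ Fintype.card (Fin m) = (M.charpoly.roots.map (fun _ => -b)).prod := by
      simp [hcard]
    rw [h3, ← Multiset.prod_map_mul]
    congr 1
    apply Multiset.map_congr rfl
    intro z _
    simp
    field_simp
    ring

/-- roots of the characteristic polynomial of `1 + iC`. -/
lemma cst_roots_one_add {m : ℕ} (C : Matrix (Fin m) (Fin m) ℝ) (hC : C.IsHermitian) :
    (1 + Complex.I • C.map (fun a => (a : ℂ))).charpoly
      = ∏ j, (Polynomial.X - Polynomial.C (1 + Complex.I * (hC.eigenvalues j : ℂ))) := by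
  have hr : (C.map (fun a => (a : ℂ))).charpoly.roots
      = Finset.univ.val.map (fun j => (hC.eigenvalues j : ℂ)) := by
    have : (C.map (fun a => (a : ℂ))).charpoly
        = ∏ j, (Polynomial.X - Polynomial.C (hC.eigenvalues j : ℂ)) := by
      have := Matrix.charpoly_map C Complex.ofRealHom
      rw [hC.charpoly_eq] at this
      simp [Polynomial.map_prod] at this
      exact this
    rw [this, cst_roots_prod]
  apply Polynomial.funext
  intro t
  rw [Matrix.eval_charpoly]
  have h1 : Matrix.scalar (Fin m) t - (1 + Complex.I • C.map (fun a => (a : ℂ)))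
      = (t - 1) • (1 : Matrix (Fin m) (Fin m) ℂ) + (-Complex.I) • C.map (fun a => (a : ℂ)) := by
    ext i j
    by_cases hij : i = j
    · subst hij; simp; ring
    · simp [hij]
  rw [h1, cst_det_affine, hr, Multiset.map_map, Polynomial.eval_prod]
  change ∏ j, _ = _
  apply Finset.prod_congr rfl
  intro j _
  simp
  ring

lemma cst_arg_one_add (x : ℝ) : Complex.arg (1 + Complex.I * (x : ℂ)) = Real.arctan x := by
  rw [Complex.arg_of_re_nonneg (by simp)]
  rw [Real.arctan_eq_arcsin]
  congr 1
  have : ‖(1 + Complex.I * (x : ℂ))‖ = √(1 + x ^ 2) := by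
    rw [Complex.norm_def, Complex.normSq_apply]; simp; ring_nf
  rw [this]; simp

/-- The path of matrices, with constant Schur complement `C`. -/
noncomputable def cstPath {n : ℕ} (β : ℝ) (b : Fin n → ℝ) (C : Matrix (Fin n) (Fin n) ℝ) (r : ℝ) :
    Matrix (Fin (n+1)) (Fin (n+1)) ℝ :=
  Matrix.of (Fin.cons (Fin.cons β (fun j => r * b j) : Fin (n+1) → ℝ)
    (fun i => (Fin.cons (r * b i) (fun j => C i j + r ^ 2 * b i * b j / β) : Fin (n+1) → ℝ)))

lemma cst_cmat_apply {n : ℕ} (A : Matrix (Fin (n+1)) (Fin (n+1)) ℝ) (i j : Fin (n+1)) :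
    cmat A i j = (if i = j then (if i = 0 then 0 else 1) else 0) + Complex.I * (A i j : ℂ) := by
  simp [cmat, Inmat, Matrix.diagonal_apply]

lemma cst_det_path {n : ℕ} (β : ℝ) (hβ : 0 < β) (b : Fin n → ℝ) (C : Matrix (Fin n) (Fin n) ℝ)
    (r : ℝ) : (cmat (cstPath β b C r)).det
      = Complex.I * β * (1 + Complex.I • C.map (fun a => (a : ℂ))).det := by
  have hβ' : (β : ℂ) ≠ 0 := by exact_mod_cast hβ.ne'
  let N : Matrix (Fin (n+1)) (Fin (n+1)) ℂ :=
    Matrix.of (Fin.cons (Fin.cons (Complex.I * β) (fun j => Complex.I * (r * b j)) : Fin (n+1) → ℂ)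
    (fun i => (Fin.cons 0 (fun j => (1 + Complex.I • C.map (fun a => (a : ℂ))) i j) :
      Fin (n+1) → ℂ)))
  have h1 : (cmat (cstPath β b C r)).det = N.det := by
    apply Matrix.det_eq_of_forall_row_eq_smul_add_const
      (Fin.cons 0 (fun i => (r * b i / β : ℂ)) : Fin (n+1) → ℂ) 0 (by simp)
    intro i j
    rw [cst_cmat_apply]
    refine Fin.cases ?_ (fun i => ?_) i <;> refine Fin.cases ?_ (fun j => ?_) j
    · simp [N, cstPath]
    · simp [N, cstPath, Fin.succ_ne_zero, (Fin.succ_ne_zero _).symm]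
    · simp [N, cstPath, Fin.succ_ne_zero]; field_simp
    · simp [N, cstPath, Fin.succ_ne_zero, Matrix.one_apply]; field_simp; ring
  rw [h1, Matrix.det_succ_column_zero, Fin.sum_univ_succ]
  have h2 : N.submatrix (Fin.succAbove 0) Fin.succ = 1 + Complex.I • C.map (fun a => (a : ℂ)) := by
    ext i j; simp [N]
  rw [h2]
  simp [N]

lemma cst_roots_path_zero {n : ℕ} (β : ℝ) (b : Fin n → ℝ)
    (C : Matrix (Fin n) (Fin n) ℝ) (hC : C.IsHermitian) :
    (cmat (cstPath β b C 0)).charpoly.roots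
      = (Complex.I * β) ::ₘ
        (Finset.univ.val.map (fun j => 1 + Complex.I * (hC.eigenvalues j : ℂ))) := by
  have h : (cmat (cstPath β b C 0)).charpoly
      = (Polynomial.X - Polynomial.C (Complex.I * β)) *
        (1 + Complex.I • C.map (fun a => (a : ℂ))).charpoly := by
    rw [Matrix.charpoly, Matrix.det_succ_column_zero, Fin.sum_univ_succ]
    have h2 : (cmat (cstPath β b C 0)).charmatrix.submatrix (Fin.succAbove 0) Fin.succ
        = (1 + Complex.I • C.map (fun a => (a : ℂ))).charmatrix := by
      ext1 i j
      rw [Matrix.submatrix_apply, Matrix.charmatrix_apply, Matrix.charmatrix_apply, cst_cmat_apply]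
      simp [cstPath, Matrix.diagonal_apply, Matrix.one_apply, Fin.succ_ne_zero]
    rw [h2]
    simp [Matrix.charmatrix_apply, cst_cmat_apply, cstPath, Matrix.charpoly, Fin.succ_ne_zero]
  rw [h, cst_roots_one_add C hC, Polynomial.roots_mul, Polynomial.roots_X_sub_C,
    cst_roots_prod]
  · rfl
  · refine mul_ne_zero (Polynomial.X_sub_C_ne_zero _) (Finset.prod_ne_zero_iff.2 ?_)
    intro j _
    exact Polynomial.X_sub_C_ne_zero _

lemma cst_det_ne {n : ℕ} (C : Matrix (Fin n) (Fin n) ℝ) (hC : C.IsHermitian) :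
    (1 + Complex.I • C.map (fun a => (a : ℂ))).det ≠ 0 := by
  rw [Matrix.det_eq_prod_roots_charpoly, cst_roots_one_add C hC, cst_roots_prod]
  change ∏ j, _ ≠ _
  refine Finset.prod_ne_zero_iff.2 ?_
  intro j _ h
  have := congrArg Complex.re h
  simp at this

lemma cst_root_re {n : ℕ} (A : Matrix (Fin (n+1)) (Fin (n+1)) ℝ) (hA : A.IsSymm) (z : ℂ)
    (hz : z ∈ (cmat A).charpoly.roots) : 0 ≤ z.re := by
  have h0 : (Matrix.scalar _ z - cmat A).det = 0 := by
    rw [← Matrix.eval_charpoly]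
    exact (Polynomial.mem_roots'.1 hz).2
  obtain ⟨v, hv, hv0⟩ := Matrix.exists_mulVec_eq_zero_iff.2 h0
  have h1 : cmat A *ᵥ v = z • v := by
    rw [Matrix.sub_mulVec, sub_eq_zero] at hv0
    rw [← hv0]; ext i; simp [Matrix.mulVec_diagonal]
  have h2 : star v ⬝ᵥ (cmat A *ᵥ v) = z * (star v ⬝ᵥ v) := by
    rw [h1, dotProduct_smul, smul_eq_mul]
  have hH : (A.map (fun a => (a : ℂ))).IsHermitian := by
    ext i j
    simp [hA.apply]
  have h3 := hH.im_star_dotProduct_mulVec_self v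
  have h4 : (star v ⬝ᵥ v) = ((∑ i, ‖v i‖ ^ 2 : ℝ) : ℂ) := by
    simp [dotProduct, Complex.conj_mul']
  have h5 : star v ⬝ᵥ (Inmat n *ᵥ v) = ((∑ i, (if i = 0 then 0 else ‖v i‖ ^ 2) : ℝ) : ℂ) := by
    simp only [dotProduct, Inmat, Matrix.mulVec_diagonal]
    push_cast
    apply Finset.sum_congr rfl
    intro i _
    by_cases hi : i = 0 <;> simp [hi, Complex.conj_mul']
  rw [cmat, Matrix.add_mulVec, Matrix.smul_mulVec, dotProduct_add, dotProduct_smul, h4, h5] at h2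
  have h6 := congrArg Complex.re h2
  simp only [RCLike.im_to_complex] at h3
  rw [Complex.add_re, Complex.ofReal_re, smul_eq_mul, Complex.mul_re, h3, Complex.mul_re,
    Complex.ofReal_re, Complex.ofReal_im] at h6
  simp only [Complex.I_re, zero_mul, mul_zero, sub_zero, add_zero] at h6
  have h7 : 0 < ∑ i, ‖v i‖ ^ 2 := by
    obtain ⟨i, hi⟩ := Function.ne_iff.1 hv
    exact Finset.sum_pos' (fun _ _ => by positivity) ⟨i, Finset.mem_univ _, by
      have : 0 < ‖v i‖ := norm_pos_iff.2 hi
      positivity⟩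
  have h8 : 0 ≤ ∑ i, (if i = 0 then 0 else ‖v i‖ ^ 2) :=
    Finset.sum_nonneg (fun i _ => by split_ifs <;> positivity)
  rw [h6] at h8
  exact nonneg_of_mul_nonneg_left h8 h7

/-- sum of logarithms along the segment from `1` to `z`. -/
noncomputable def cstPhi (R : Multiset ℂ) (s : ℝ) : ℂ :=
  (R.map (fun z => Complex.log ((1 - s : ℂ) + s * z))).sum

lemma cst_slit {z : ℂ} (hz : z ∈ Complex.slitPlane) (hre : 0 ≤ z.re) {s : ℝ} (h0 : 0 ≤ s)
    (h1 : s ≤ 1) : ((1 - s : ℂ) + s * z) ∈ Complex.slitPlane := by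
  rcases eq_or_lt_of_le h1 with rfl | h1
  · simpa using hz
  · left
    simp
    nlinarith [mul_nonneg h0 hre]

lemma cst_phi_exp (R : Multiset ℂ) (s : ℝ)
    (hR : ∀ z ∈ R, ((1 - s : ℂ) + s * z) ∈ Complex.slitPlane) :
    Complex.exp (cstPhi R s) = (R.map (fun z => (1 - s : ℂ) + s * z)).prod := by
  rw [cstPhi, Complex.exp_multiset_sum, Multiset.map_map]
  congr 1
  apply Multiset.map_congr rfl
  intro z hz
  exact Complex.exp_log (Complex.slitPlane_ne_zero (hR z hz))

lemma cst_phi_diff (R : Multiset ℂ) (s : ℝ)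
    (hR : ∀ z ∈ R, ((1 - s : ℂ) + s * z) ∈ Complex.slitPlane) :
    DifferentiableAt ℝ (cstPhi R) s := by
  induction R using Multiset.induction_on with
  | empty => 
    have : cstPhi 0 = fun _ => 0 := by ext; simp [cstPhi]
    rw [this]; exact differentiableAt_const _
  | cons a R ih =>
    have : cstPhi (a ::ₘ R) = fun s : ℝ => Complex.log ((1 - s : ℂ) + s * a) + cstPhi R s := by
      ext; simp [cstPhi]
    rw [this]
    refine DifferentiableAt.fun_add ?_ (ih (fun z hz => hR z (Multiset.mem_cons_of_mem hz)))
    have h1 : HasDerivAt (fun s : ℝ => ((1 - s : ℂ) + s * a)) (-1 + 1 * a) s := by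
      have h2 : HasDerivAt (fun s : ℝ => (s : ℂ)) 1 s := Complex.ofRealCLM.hasDerivAt
      exact (h2.const_sub 1).add (h2.mul_const a)
    exact (h1.clog_real (hR a (Multiset.mem_cons_self _ _))).differentiableAt

lemma cst_arg_const {m : ℕ} (M : ℝ → Matrix (Fin m) (Fin m) ℂ)
    (hM : ∀ i j, ContDiff ℝ 2 (fun r => M r i j))
    (hslit : ∀ r, ∀ z ∈ (M r).charpoly.roots, z ∈ Complex.slitPlane ∧ 0 ≤ z.re)
    (d : ℂ) (hdet : ∀ r, (M r).det = d) (r₀ r₁ : ℝ) :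
    ((M r₀).charpoly.roots.map Complex.arg).sum = ((M r₁).charpoly.roots.map Complex.arg).sum := by
  let q : ℝ × ℝ → ℂ := fun p => ((1 - p.2 : ℂ) • (1 : Matrix (Fin m) (Fin m) ℂ)
    + (p.2 : ℂ) • M p.1).det
  have hq : ContDiff ℝ 2 q := by
    simp only [q, Matrix.det_apply]
    have h2 : ContDiff ℝ 2 (fun p : ℝ × ℝ => (p.2 : ℂ)) :=
      Complex.ofRealCLM.contDiff.comp contDiff_snd
    refine ContDiff.sum fun σ _ => ContDiff.const_smul _ (contDiff_prod fun i _ => ?_)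
    simp only [Matrix.add_apply, Matrix.smul_apply, smul_eq_mul]
    exact ((contDiff_const.sub h2).mul contDiff_const).add
      (h2.mul ((hM _ _).comp contDiff_fst))
  have hs : ∀ r s : ℝ, 0 ≤ s → s ≤ 1 → ∀ z ∈ (M r).charpoly.roots,
      ((1 - s : ℂ) + s * z) ∈ Complex.slitPlane := fun r s h0 h1 z hz =>
    cst_slit (hslit r z hz).1 (hslit r z hz).2 h0 h1
  have hqprod : ∀ r s : ℝ, q (r, s) = ((M r).charpoly.roots.map (fun z => (1 - s : ℂ) + s * z)).prod :=
    fun r s => cst_det_affine _ _ _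
  have hqexp : ∀ r s : ℝ, 0 ≤ s → s ≤ 1 → Complex.exp (cstPhi (M r).charpoly.roots s) = q (r, s) :=
    fun r s h0 h1 => by rw [cst_phi_exp _ _ (hs r s h0 h1), hqprod]
  have hqne : ∀ r s : ℝ, 0 ≤ s → s ≤ 1 → q (r, s) ≠ 0 := fun r s h0 h1 => by
    rw [← hqexp r s h0 h1]; exact Complex.exp_ne_zero _
  let G : ℝ × ℝ → ℂ := fun p => fderiv ℝ q p (0, 1)
  have hG : Continuous G := (hq.continuous_fderiv (by norm_num)).clm_apply continuous_const
  have hGder : ∀ r s, HasDerivAt (fun s => q (r, s)) (G (r, s)) s := by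
    intro r s
    have h1 : HasFDerivAt q (fderiv ℝ q (r, s)) (r, s) :=
      ((hq.differentiable (by norm_num)) _).hasFDerivAt
    have h2 : HasDerivAt (fun s : ℝ => (r, s)) ((0 : ℝ), (1 : ℝ)) s :=
      (hasDerivAt_const s r).prodMk (hasDerivAt_id s)
    exact h1.comp_hasDerivAt s h2
  let cl : ℝ → ℝ := fun s => max 0 (min 1 s)
  have hcl0 : ∀ s, 0 ≤ cl s := fun s => le_max_left _ _
  have hcl1 : ∀ s, cl s ≤ 1 := fun s => max_le zero_le_one (min_le_left _ _)
  have hclc : Continuous cl := continuous_const.max (continuous_const.min continuous_id)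
  have hcleq : ∀ s, 0 ≤ s → s ≤ 1 → cl s = s := fun s h0 h1 => by simp [cl, h0, h1]
  let f : ℝ → ℝ → ℂ := fun r s => G (r, cl s) / q (r, cl s)
  have hfc : Continuous (Function.uncurry f) := by
    have hp : Continuous (fun p : ℝ × ℝ => (p.1, cl p.2)) :=
      continuous_fst.prodMk (hclc.comp continuous_snd)
    exact (hG.comp hp).div (hq.continuous.comp hp) (fun p => hqne _ _ (hcl0 _) (hcl1 _))
  have hFc : Continuous (fun r => ∫ s in (0:ℝ)..1, f r s) :=
    intervalIntegral.continuous_parametric_intervalIntegral_of_continuous' hfc 0 1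
  have hphi0 : ∀ R : Multiset ℂ, cstPhi R 0 = 0 := fun R => by simp [cstPhi]
  have hInteg : ∀ r, ∫ s in (0:ℝ)..1, f r s = cstPhi (M r).charpoly.roots 1 := by
    intro r
    have hd : ∀ s, 0 ≤ s → s ≤ 1 → DifferentiableAt ℝ (cstPhi (M r).charpoly.roots) s :=
      fun s h0 h1 => cst_phi_diff _ _ (hs r s h0 h1)
    have := intervalIntegral.integral_eq_sub_of_hasDerivAt_of_le (f := cstPhi (M r).charpoly.roots)
      (f' := f r) (zero_le_one) (fun s hs' => (hd s hs'.1 hs'.2).continuousAt.continuousWithinAt)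
      ?_ ?_
    · rw [this, hphi0, sub_zero]
    · intro s hs'
      have h1 := (hd s hs'.1.le hs'.2.le).hasDerivAt
      have h2 := h1.cexp
      have h3 : HasDerivAt (fun s => Complex.exp (cstPhi (M r).charpoly.roots s)) (G (r, s)) s := by
        refine (hGder r s).congr_of_eventuallyEq ?_
        filter_upwards [Ioo_mem_nhds hs'.1 hs'.2] with t ht
        exact hqexp r t ht.1.le ht.2.le
      have h4 := h2.unique h3
      rw [hqexp r s hs'.1.le hs'.2.le] at h4
      have h5 : f r s = deriv (cstPhi (M r).charpoly.roots) s := by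
        simp only [f, hcleq s hs'.1.le hs'.2.le]
        rw [← h4, mul_div_cancel_left₀ _ (hqne r s hs'.1.le hs'.2.le)]
      rw [h5]; exact h1
    · exact (hfc.comp (Continuous.prodMk_right r)).intervalIntegrable _ _
  have hFc' : Continuous (fun r => cstPhi (M r).charpoly.roots 1) := by
    simpa only [hInteg] using hFc
  have hexp : ∀ r, Complex.exp (cstPhi (M r).charpoly.roots 1) = d := by
    intro r
    rw [hqexp r 1 zero_le_one le_rfl, ← hdet r]
    simp [q]
  have him : ∀ r, (cstPhi (M r).charpoly.roots 1).im
      = ((M r).charpoly.roots.map Complex.arg).sum := by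
    intro r
    rw [cstPhi]
    have := map_multiset_sum Complex.imAddGroupHom
      ((M r).charpoly.roots.map (fun z => Complex.log ((1 - (1:ℝ) : ℂ) + (1:ℝ) * z)))
    rw [Multiset.map_map] at this
    simp only [Complex.coe_imAddGroupHom] at this
    rw [this]
    congr 1
    apply Multiset.map_congr rfl
    intro z _
    simp [Complex.log_im]
  have hk : ∀ r, ∃ k : ℤ, cstPhi (M r).charpoly.roots 1
      = cstPhi (M r₁).charpoly.roots 1 + k * (2 * π * Complex.I) := fun r =>
    Complex.exp_eq_exp_iff_exists_int.1 ((hexp r).trans (hexp r₁).symm)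
  choose k hk using hk
  have hkim : ∀ r, (cstPhi (M r).charpoly.roots 1).im
      = (cstPhi (M r₁).charpoly.roots 1).im + k r * (2 * π) := by
    intro r
    conv_lhs => rw [hk r]
    simp
  have hkr : Continuous (fun r => (k r : ℝ)) := by
    have : (fun r => (k r : ℝ)) = fun r => ((cstPhi (M r).charpoly.roots 1).im
      - (cstPhi (M r₁).charpoly.roots 1).im) / (2 * π) := by
      ext r
      rw [hkim r]
      field_simp
      ring
    rw [this]
    exact ((Complex.continuous_im.comp hFc').sub continuous_const).div_const _
  have hkc : Continuous k := Int.isClosedEmbedding_coe_real.isEmbedding.continuous_iff.2 hkr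
  have hkk : k r₀ = k r₁ :=
    isPreconnected_univ.constant hkc.continuousOn (Set.mem_univ _) (Set.mem_univ _)
  rw [← him, ← him, hkim r₀, hkim r₁, hkk]
  have := hkim r₁
  linarith

lemma cst_angle {n : ℕ} (β : ℝ) (hβ : 0 < β) (b : Fin n → ℝ) (C : Matrix (Fin n) (Fin n) ℝ)
    (hC : C.IsSymm) :
    spaceTimeAngle (cstPath β b C 1) = π / 2 + liftedAngle C := by
  have hCH : C.IsHermitian := by
    ext i j; simp [hC.apply]
  have hne : ∀ r, (cmat (cstPath β b C r)).det ≠ 0 := by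
    intro r
    rw [cst_det_path β hβ]
    refine mul_ne_zero (mul_ne_zero Complex.I_ne_zero ?_) (cst_det_ne C hCH)
    exact_mod_cast hβ.ne'
  have hsym : ∀ r, (cstPath β b C r).IsSymm := by
    intro r
    ext i j
    refine Fin.cases ?_ (fun i => ?_) i <;> refine Fin.cases ?_ (fun j => ?_) j <;>
      simp [cstPath]
    rw [hC.apply]; ring
  rw [spaceTimeAngle, if_neg (hne 1), cst_arg_const (fun r => cmat (cstPath β b C r)) ?_ ?_ _
    (fun r => cst_det_path β hβ b C r) 1 0, cst_roots_path_zero β b C hCH, liftedAngle, dif_pos hCH]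
  · rw [Multiset.map_cons, Multiset.sum_cons, Multiset.map_map]
    congr 1
    · rw [mul_comm, Complex.arg_real_mul _ hβ, Complex.arg_I]
    · change ∑ j, _ = _
      apply Finset.sum_congr rfl
      intro j _
      exact cst_arg_one_add _
  · intro i j
    simp only [cst_cmat_apply]
    refine contDiff_const.add (contDiff_const.mul (Complex.ofRealCLM.contDiff.comp ?_))
    refine Fin.cases ?_ (fun i => ?_) i <;> refine Fin.cases ?_ (fun j => ?_) j <;>
      simp [cstPath] <;> fun_prop
  · intro r z hz
    have h1 := cst_root_re _ (hsym r) z hz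
    refine ⟨?_, h1⟩
    have h0 : z ≠ 0 := by
      rintro rfl
      apply hne r
      rw [Matrix.det_eq_prod_roots_charpoly]
      exact Multiset.prod_eq_zero hz
    rw [Complex.mem_slitPlane_iff_not_le_zero]
    intro hle
    have h2 := (Complex.le_def.1 hle)
    simp at h2
    exact h0 (Complex.ext (by simp; linarith) (by simp; linarith))

/-! ### Analytic part -/

lemma cst_sum_single {m : ℕ} (Q : (Fin m → ℝ) →L[ℝ] (Fin m → ℝ) →L[ℝ] ℝ) (z : Fin m → ℝ) :
    Q z z = z ⬝ᵥ ((Matrix.of fun i j => Q (Pi.single i 1) (Pi.single j 1)) *ᵥ z) := by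
  have hz : z = ∑ i, z i • (Pi.single i (1 : ℝ) : Fin m → ℝ) := by
    ext j; simp [Finset.sum_apply, Pi.single_apply]
  have h1 : ∀ u w : Fin m → ℝ, Q u w = ∑ i, u i * ∑ j, Q (Pi.single i 1) (Pi.single j 1) * w j := by
    intro u w
    have hu : u = ∑ i, u i • (Pi.single i (1 : ℝ) : Fin m → ℝ) := by
      ext j; simp [Finset.sum_apply, Pi.single_apply]
    have hw : w = ∑ i, w i • (Pi.single i (1 : ℝ) : Fin m → ℝ) := by
      ext j; simp [Finset.sum_apply, Pi.single_apply]
    conv_lhs => rw [hu, hw]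
    simp only [map_sum, map_smul, _root_.sum_apply, _root_.smul_apply,
      smul_eq_mul, Finset.mul_sum]
    rw [Finset.sum_comm]
    refine Finset.sum_congr rfl fun i _ => Finset.sum_congr rfl fun j _ => by ring
  rw [h1]
  rfl

lemma cst_hess_apply {m : ℕ} (v : (Fin m → ℝ) → ℝ) (y : Fin m → ℝ) :
    hessianMatrix v y
      = Matrix.of fun i j => fderiv ℝ (fderiv ℝ v) y (Pi.single i 1) (Pi.single j 1) := by
  ext i j
  simp [hessianMatrix, iteratedFDeriv_two_apply]

lemma cst_taylor {m : ℕ} (v : (Fin m → ℝ) → ℝ) (y₀ : Fin m → ℝ) (hv : ContDiffAt ℝ 2 v y₀)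
    (ε : ℝ) (hε : 0 < ε) : ∃ ρ > 0, ∀ z : Fin m → ℝ, ‖z‖ < ρ →
      |v (y₀ + z) - v y₀ - fderiv ℝ v y₀ z - (1/2) * (z ⬝ᵥ (hessianMatrix v y₀ *ᵥ z))|
        ≤ ε * ‖z‖ ^ 2 := by
  set L := fderiv ℝ v y₀ with hL
  set Q := fderiv ℝ (fderiv ℝ v) y₀ with hQ
  have hsym : ∀ u w, Q u w = Q w u := fun u w =>
    (hv.isSymmSndFDerivAt (by simp)).eq u w
  have hd1 : ∀ᶠ y in nhds y₀, DifferentiableAt ℝ v y := by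
    filter_upwards [hv.eventually (by simp)] with y hy
    exact hy.differentiableAt (by norm_num)
  have hd2 : HasFDerivAt (fderiv ℝ v) Q y₀ := by
    have : ContDiffAt ℝ 1 (fderiv ℝ v) y₀ := hv.fderiv_right (by norm_num)
    exact (this.differentiableAt (by norm_num)).hasFDerivAt
  have hd3 : ∀ᶠ y in nhds y₀, ‖fderiv ℝ v y - L - Q (y - y₀)‖ ≤ ε * ‖y - y₀‖ :=
    (hasFDerivAt_iff_isLittleO.1 hd2).def hε
  obtain ⟨ρ, hρ, hball⟩ := Metric.eventually_nhds_iff_ball.1 (hd1.and hd3)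
  refine ⟨ρ, hρ, fun z hz => ?_⟩
  have hQz : z ⬝ᵥ (hessianMatrix v y₀ *ᵥ z) = Q z z := by
    rw [cst_hess_apply, cst_sum_single Q]
  rw [hQz]
  let g : (Fin m → ℝ) → ℝ := fun y => v y - v y₀ - L (y - y₀) - (1/2) * Q (y - y₀) (y - y₀)
  have hsub : ∀ y : Fin m → ℝ, HasFDerivAt (fun y => y - y₀) (ContinuousLinearMap.id ℝ (Fin m → ℝ)) y :=
    fun y => (hasFDerivAt_id y).sub_const y₀
  have hg : ∀ y ∈ Metric.ball y₀ ρ, HasFDerivAt g (fderiv ℝ v y - L - Q (y - y₀)) y := by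
    intro y hy
    have h1 := (hball y hy).1.hasFDerivAt
    have h2 : HasFDerivAt (fun y => L (y - y₀)) L y := L.hasFDerivAt.comp y (hsub y)
    have h3 : HasFDerivAt (fun y => Q (y - y₀)) Q y := Q.hasFDerivAt.comp y (hsub y)
    have h4 := h3.clm_apply (hsub y)
    have h5 := ((h1.sub_const (v y₀)).sub h2).sub (h4.const_mul (1/2))
    refine h5.congr_fderiv ?_
    ext w
    simp
    rw [hsym w y, hsym w y₀]
    ring
  have hmv := (convex_closedBall y₀ ‖z‖).norm_image_sub_le_of_norm_hasFDerivWithin_le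
    (f := g) (f' := fun y => fderiv ℝ v y - L - Q (y - y₀)) (C := ε * ‖z‖) (x := y₀) (y := y₀ + z)
    (fun y hy => (hg y (Metric.closedBall_subset_ball hz hy)).hasFDerivWithinAt)
    (fun y hy => (hball y (Metric.closedBall_subset_ball hz hy)).2.trans (by
      have : ‖y - y₀‖ ≤ ‖z‖ := by simpa [dist_eq_norm] using hy
      gcongr))
    (by simp) (by simp)
  have h0 : g y₀ = 0 := by simp [g]
  rw [h0, sub_zero] at hmv
  simp only [g, add_sub_cancel_left, Real.norm_eq_abs] at hmv
  calc _ ≤ ε * ‖z‖ * ‖z‖ := hmv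
    _ = _ := by ring

/-- The quadratic test function. -/
noncomputable def cstQuad {m : ℕ} (C : Matrix (Fin m) (Fin m) ℝ) (x₀ x : Fin m → ℝ) : ℝ :=
  -(1/2) * ((x - x₀) ⬝ᵥ (C *ᵥ (x - x₀)))

lemma cst_quad {m : ℕ} (C : Matrix (Fin m) (Fin m) ℝ) (hC : C.IsSymm) (x₀ : Fin m → ℝ) :
    ContDiff ℝ 2 (cstQuad C x₀) ∧ ∀ x, hessianMatrix (cstQuad C x₀) x = -C := by
  let Q : (Fin m → ℝ) →L[ℝ] (Fin m → ℝ) →L[ℝ] ℝ :=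
    ∑ i, ∑ j, C i j • (ContinuousLinearMap.proj (R := ℝ) (φ := fun _ : Fin m => ℝ) i).smulRight
      (ContinuousLinearMap.proj (R := ℝ) (φ := fun _ : Fin m => ℝ) j)
  have hQ : ∀ u w, Q u w = ∑ i, ∑ j, C i j * (u i * w j) := by
    intro u w; simp [Q]
  have hsym : ∀ u w, Q u w = Q w u := by
    intro u w
    rw [hQ, hQ, Finset.sum_comm]
    refine Finset.sum_congr rfl fun i _ => Finset.sum_congr rfl fun j _ => ?_
    rw [hC.apply]; ring
  have hQe : ∀ i j, Q (Pi.single i 1) (Pi.single j 1) = C i j := by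
    intro i j
    rw [hQ, Finset.sum_eq_single i, Finset.sum_eq_single j] <;>
      simp +contextual [Pi.single_apply]
  have hV : cstQuad C x₀ = fun x => -(1/2) * Q (x - x₀) (x - x₀) := by
    ext x
    rw [cst_sum_single Q]
    have : (Matrix.of fun i j => Q (Pi.single i 1) (Pi.single j 1)) = C := by
      ext i j; exact hQe i j
    rw [this]; rfl
  have hsub : ∀ y : Fin m → ℝ, HasFDerivAt (fun y => y - x₀) (ContinuousLinearMap.id ℝ (Fin m → ℝ)) y :=
    fun y => (hasFDerivAt_id y).sub_const x₀
  have h3 : ∀ y, HasFDerivAt (fun y => Q (y - x₀)) Q y := fun y => Q.hasFDerivAt.comp y (hsub y)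
  have hf : fderiv ℝ (cstQuad C x₀) = fun x => -(Q (x - x₀)) := by
    ext1 x
    rw [hV]
    have h4 := ((h3 x).clm_apply (hsub x)).const_mul (-(1/2))
    rw [h4.fderiv]
    ext w
    simp
    rw [hsym w x, hsym w x₀]
    ring
  constructor
  · rw [hV]
    have h6 : ContDiff ℝ 2 (fun x : Fin m → ℝ => x - x₀) := contDiff_id.sub contDiff_const
    exact contDiff_const.mul ((Q.contDiff.comp h6).clm_apply h6)
  · intro x
    rw [cst_hess_apply, hf, (h3 x).fun_neg.fderiv]
    ext i j
    simp [hQe]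

/-- the linear map `ξ ↦ (-(b·ξ)/β, ξ)`. -/
noncomputable def cstLift {n : ℕ} (β : ℝ) (b : Fin n → ℝ) :
    (Fin n → ℝ) →ₗ[ℝ] (Fin (n+1) → ℝ) where
  toFun ξ := Fin.cons (-(b ⬝ᵥ ξ) / β) ξ
  map_add' x y := by
    ext i
    refine Fin.cases ?_ (fun i => ?_) i
    · simp [dotProduct_add]; ring
    · simp
  map_smul' a x := by
    ext i
    refine Fin.cases ?_ (fun i => ?_) i
    · simp; ring
    · simp

lemma cst_lift_quad {n : ℕ} (β : ℝ) (hβ : 0 < β) (b : Fin n → ℝ) (C : Matrix (Fin n) (Fin n) ℝ)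
    (ξ : Fin n → ℝ) :
    cstLift β b ξ ⬝ᵥ (cstPath β b C 1 *ᵥ cstLift β b ξ) = ξ ⬝ᵥ (C *ᵥ ξ) := by
  have h0 : (cstPath β b C 1 *ᵥ cstLift β b ξ) 0 = 0 := by
    simp only [Matrix.mulVec, dotProduct, Fin.sum_univ_succ, cstPath, cstLift]
    simp [dotProduct]
    field_simp
    simp
  have h1 : ∀ i, (cstPath β b C 1 *ᵥ cstLift β b ξ) (Fin.succ i) = (C *ᵥ ξ) i := by
    intro i
    simp only [Matrix.mulVec, dotProduct, Fin.sum_univ_succ, cstPath, cstLift]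
    simp [dotProduct, add_mul, Finset.sum_add_distrib]
    have : ∑ x, b i * b x / β * ξ x = b i / β * ∑ x, b x * ξ x := by
      rw [Finset.mul_sum]
      exact Finset.sum_congr rfl fun j _ => by ring
    rw [this]; ring
  simp only [dotProduct, Fin.sum_univ_succ, h0, h1]
  simp [cstLift]

lemma cst_quad_bound {m : ℕ} (A : Matrix (Fin m) (Fin m) ℝ) (η : ℝ) (hA : ∀ i j, |A i j| ≤ η)
    (z : Fin m → ℝ) : |z ⬝ᵥ (A *ᵥ z)| ≤ m ^ 2 * η * ‖z‖ ^ 2 := by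
  have h1 : z ⬝ᵥ (A *ᵥ z) = ∑ i, ∑ j, z i * (A i j * z j) := by
    simp [dotProduct, Matrix.mulVec, Finset.mul_sum]
  rw [h1]
  calc _ ≤ ∑ i, ∑ j, |z i * (A i j * z j)| :=
        (Finset.abs_sum_le_sum_abs _ _).trans
          (Finset.sum_le_sum fun i _ => Finset.abs_sum_le_sum_abs _ _)
    _ ≤ ∑ _i : Fin m, ∑ _j : Fin m, ‖z‖ * (η * ‖z‖) := by
        refine Finset.sum_le_sum fun i _ => Finset.sum_le_sum fun j _ => ?_
        rw [abs_mul, abs_mul]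
        have hi : |z i| ≤ ‖z‖ := norm_le_pi_norm z i
        have hj : |z j| ≤ ‖z‖ := norm_le_pi_norm z j
        have hη : 0 ≤ η := (abs_nonneg _).trans (hA i j)
        have := hA i j
        gcongr
    _ = _ := by simp; ring

lemma cst_core (n : ℕ) (c : ℝ) (D : Set (Fin n → ℝ)) (hDopen : IsOpen D)
    (h : (Fin n → ℝ) → ℝ)
    (hhF : IsTypeF (Fc n (c - π / 2)) D (fun x => ((h x : ℝ) : EReal)))
    (x₀ : Fin n → ℝ) (hx₀ : x₀ ∈ D) (Λ : (Fin (n+1) → ℝ) →ₗ[ℝ] ℝ)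
    (H : Matrix (Fin (n+1)) (Fin (n+1)) ℝ) (hH : H.IsSymm) (ε ρ : ℝ) (hε : 0 < ε) (hρ : 0 < ρ)
    (hle : ∀ z : Fin (n+1) → ℝ, ‖z‖ < ρ →
      h (x₀ + Fin.tail z) ≤ h x₀ + Λ z + (1/2) * (z ⬝ᵥ (H *ᵥ z)) - ε * ‖z‖ ^ 2) :
    H ∈ symInterior (calF n c) := by
  -- positivity of the corner
  have hH00 : 2 * ε ≤ H 0 0 := by
    let e : Fin (n+1) → ℝ := Pi.single 0 (ρ/2)
    have hen : ‖e‖ = ρ / 2 := by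
      rw [Pi.norm_single, Real.norm_eq_abs, abs_of_pos (by positivity)]
    have het : Fin.tail e = 0 := by ext i; simp [e, Fin.tail, Fin.succ_ne_zero]
    have heq : e ⬝ᵥ (H *ᵥ e) = H 0 0 * (ρ/2)^2 := by
      simp [e]; ring
    have hnt : Fin.tail (-e) = 0 := by
      ext i; simpa [Fin.tail] using congrFun het i
    have h1 := hle e (by rw [hen]; linarith)
    have h2 := hle (-e) (by rw [norm_neg, hen]; linarith)
    rw [het, hen, heq] at h1
    rw [hnt, norm_neg, hen, map_neg, Matrix.mulVec_neg, dotProduct_neg, neg_dotProduct, neg_neg,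
      heq] at h2
    have h3 : 0 ≤ (H 0 0 - 2 * ε) * (ρ/2)^2 := by
      simp only [add_zero] at h1 h2
      nlinarith
    have := nonneg_of_mul_nonneg_left h3 (by positivity)
    linarith
  refine ⟨hH, ?_⟩
  let η : ℝ := ε / ((n+1 : ℕ) ^ 2)
  have hη : 0 < η := by positivity
  have hηε : η ≤ ε := div_le_self hε.le (by
    have : (1:ℝ) ≤ ((n+1 : ℕ) : ℝ) := by simp
    nlinarith)
  have hev : ∀ᶠ B : Matrix (Fin (n+1)) (Fin (n+1)) ℝ in nhds H, ∀ i j, |B i j - H i j| < η := by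
    rw [Filter.eventually_all]; intro i
    rw [Filter.eventually_all]; intro j
    have hc : Continuous (fun B : Matrix (Fin (n+1)) (Fin (n+1)) ℝ => |B i j - H i j|) :=
      ((continuous_id.matrix_elem i j).sub continuous_const).abs
    exact hc.continuousAt.eventually_lt continuousAt_const (by simpa using hη)
  filter_upwards [hev] with B hB hBs
  refine ⟨hBs, ?_⟩
  by_contra hlt
  push Not at hlt
  -- the Schur complement
  let β : ℝ := B 0 0
  have hβ : 0 < β := by
    have := abs_lt.1 (hB 0 0)
    change 0 < B 0 0
    linarith [this.1]
  let b : Fin n → ℝ := fun j => B 0 j.succ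
  let C : Matrix (Fin n) (Fin n) ℝ := Matrix.of fun i j => B i.succ j.succ - b i * b j / β
  have hC : C.IsSymm := by
    ext i j
    simp only [C, Matrix.transpose_apply, Matrix.of_apply]
    rw [hBs.apply]; ring
  have hBC : B = cstPath β b C 1 := by
    ext i j
    refine Fin.cases ?_ (fun i => ?_) i <;> refine Fin.cases ?_ (fun j => ?_) j
    · simp [cstPath, β]
    · simp [cstPath, b]
    · simp [cstPath, b, hBs.apply]
    · simp [cstPath, C]
  rw [hBC, cst_angle β hβ b C hC] at hlt
  have hCF : C ∉ Fc n (c - π / 2) := fun hmem => by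
    have := hmem.2
    linarith
  obtain ⟨hV2, hVh⟩ := cst_quad C hC x₀
  have hsub := hhF.2.2 (cstQuad C x₀) hV2.contDiffOn (fun x _ => by
    rw [hVh x]
    refine ⟨hC.neg, ?_⟩
    rw [neg_neg]
    exact fun hInteg => hCF (hInteg.2.self_of_nhds hC))
  -- the key inequality
  let κ : ℝ := 1 + ∑ j, |b j| / β
  have hκ : 0 < κ := by
    have : 0 ≤ ∑ j, |b j| / β := Finset.sum_nonneg fun j _ => by positivity
    change 0 < 1 + _
    linarith
  have hz1 : ∀ ξ, ‖cstLift β b ξ‖ ≤ κ * ‖ξ‖ := by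
    intro ξ
    have hs : 0 ≤ ∑ j, |b j| / β := Finset.sum_nonneg fun j _ => by positivity
    refine (pi_norm_le_iff_of_nonneg (by positivity)).2 fun i => ?_
    refine Fin.cases ?_ (fun i => ?_) i
    · simp only [cstLift, LinearMap.coe_mk, AddHom.coe_mk, Fin.cons_zero]
      rw [Real.norm_eq_abs, abs_div, abs_neg, abs_of_pos hβ]
      have : |b ⬝ᵥ ξ| ≤ (∑ j, |b j|) * ‖ξ‖ := by
        rw [Finset.sum_mul]
        refine (Finset.abs_sum_le_sum_abs _ _).trans (Finset.sum_le_sum fun j _ => ?_)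
        rw [abs_mul]
        exact mul_le_mul_of_nonneg_left (norm_le_pi_norm ξ j) (abs_nonneg _)
      calc _ ≤ (∑ j, |b j|) * ‖ξ‖ / β := by gcongr
        _ = (∑ j, |b j| / β) * ‖ξ‖ := by rw [← Finset.sum_div]; ring
        _ ≤ _ := mul_le_mul_of_nonneg_right (by change _ ≤ 1 + _; linarith) (norm_nonneg _)
    · simp only [cstLift, LinearMap.coe_mk, AddHom.coe_mk, Fin.cons_succ]
      refine (norm_le_pi_norm ξ i).trans (le_mul_of_one_le_left (norm_nonneg _) ?_)
      change 1 ≤ 1 + _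
      linarith
  have hz2 : ∀ ξ, ‖ξ‖ ≤ ‖cstLift β b ξ‖ := by
    intro ξ
    refine (pi_norm_le_iff_of_nonneg (norm_nonneg _)).2 fun i => ?_
    have := norm_le_pi_norm (cstLift β b ξ) i.succ
    simpa [cstLift] using this
  have hkey : ∀ ξ, κ * ‖ξ‖ < ρ → h (x₀ + ξ) ≤ h x₀ + Λ (cstLift β b ξ) + (1/2) * (ξ ⬝ᵥ (C *ᵥ ξ))
      - (ε / 2) * ‖ξ‖ ^ 2 := by
    intro ξ hξ
    have h1 := hle (cstLift β b ξ) ((hz1 ξ).trans_lt hξ)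
    have ht : Fin.tail (cstLift β b ξ) = ξ := by ext i; simp [Fin.tail, cstLift]
    rw [ht] at h1
    have h2 := cst_quad_bound (H - B) η (fun i j => by
      rw [Matrix.sub_apply, abs_sub_comm]; exact (hB i j).le) (cstLift β b ξ)
    have h3 : ((n+1 : ℕ) : ℝ) ^ 2 * η = ε := by
      simp only [η]; field_simp
    rw [h3, Matrix.sub_mulVec, dotProduct_sub] at h2
    have h4 : cstLift β b ξ ⬝ᵥ (B *ᵥ cstLift β b ξ) = ξ ⬝ᵥ (C *ᵥ ξ) := by
      conv_lhs => rw [hBC]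
      exact cst_lift_quad β hβ b C ξ
    rw [h4] at h2
    have h5 := (abs_le.1 h2).2
    have h6 : ‖ξ‖ ^ 2 ≤ ‖cstLift β b ξ‖ ^ 2 := by
      have := hz2 ξ
      gcongr
    nlinarith
  -- choose the radius
  obtain ⟨δ₀, hδ₀, hball⟩ := Metric.isOpen_iff.1 hDopen x₀ hx₀
  let δ : ℝ := min (δ₀ / 2) (ρ / (2 * κ))
  have hδ : 0 < δ := lt_min (by positivity) (by positivity)
  have hδ1 : δ < δ₀ := (min_le_left _ _).trans_lt (by linarith)
  have hδ2 : κ * δ < ρ := by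
    have : δ ≤ ρ / (2 * κ) := min_le_right _ _
    calc κ * δ ≤ κ * (ρ / (2 * κ)) := by gcongr
      _ = ρ / 2 := by field_simp
      _ < ρ := by linarith
  let a : (Fin n → ℝ) →ᵃ[ℝ] ℝ :=
    { toFun := fun x => h x₀ + Λ (cstLift β b (x - x₀)) - (ε / 2) * δ ^ 2
      linear := Λ ∘ₗ cstLift β b
      map_vadd' := fun p v => by
        simp only [vadd_eq_add, LinearMap.comp_apply]
        rw [add_sub_assoc v, map_add, map_add]; ring }
  have hcon := hsub a (Metric.closedBall x₀ δ) (isCompact_closedBall _ _)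
    ((Metric.closedBall_subset_ball hδ1).trans hball) ?_ x₀ (Metric.mem_closedBall_self hδ.le)
  · beta_reduce at hcon
    rw [← EReal.coe_add, EReal.coe_le_coe_iff] at hcon
    simp [a, cstQuad] at hcon
    have : 0 < (ε / 2) * δ ^ 2 := by positivity
    linarith
  · intro x hx
    have hxs := Metric.frontier_closedBall_subset_sphere hx
    have hxn : ‖x - x₀‖ = δ := by simpa [dist_eq_norm] using hxs
    have h1 := hkey (x - x₀) (by rw [hxn]; exact hδ2)
    rw [add_sub_cancel, hxn] at h1
    beta_reduce
    rw [← EReal.coe_add, EReal.coe_le_coe_iff]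
    change h x + cstQuad C x₀ x ≤ h x₀ + Λ (cstLift β b (x - x₀)) - (ε / 2) * δ ^ 2
    simp only [cstQuad]
    linarith

/-- Let `c ∈ [nπ/2, (n+1)π/2)`, `D ⊂ ℝⁿ` a bounded domain and `I ⊂ ℝ` an open interval.
If `h ∈ F_{c−π/2}(D)` is continuous on `D`, then `w(t,x) := h(x)`, constant in `t`,
belongs to `ℱ_c(I × D)`. -/
theorem const_in_t_subsolution (n : ℕ) (c : ℝ)
    (hc : (n : ℝ) * π / 2 ≤ c) (hc' : c < ((n : ℝ) + 1) * π / 2)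
    (I : Set ℝ) (hIopen : IsOpen I) (hIconv : Convex ℝ I) (hIne : I.Nonempty)
    (D : Set (Fin n → ℝ)) (hDopen : IsOpen D) (hDconn : IsConnected D)
    (hDbdd : Bornology.IsBounded D)
    (h : (Fin n → ℝ) → ℝ)
    (hhF : IsTypeF (Fc n (c - π / 2)) D (fun x => ((h x : ℝ) : EReal)))
    (hhcont : ContinuousOn h D) :
    IsTypeF (calF n c) {y | y 0 ∈ I ∧ Fin.tail y ∈ D}
      (fun y => ((h (Fin.tail y) : ℝ) : EReal)) := by
  have htc : Continuous (fun y : Fin (n+1) → ℝ => Fin.tail y) :=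
    continuous_pi fun i => continuous_apply i.succ
  set U : Set (Fin (n+1) → ℝ) := {y | y 0 ∈ I ∧ Fin.tail y ∈ D} with hU
  have hUopen : IsOpen U :=
    (hIopen.preimage (continuous_apply 0)).inter (hDopen.preimage htc)
  have hwc : ContinuousOn (fun y : Fin (n+1) → ℝ => h (Fin.tail y)) U :=
    hhcont.comp htc.continuousOn (fun y hy => hy.2)
  refine ⟨fun _ _ => EReal.coe_ne_top _, ?_, ?_⟩
  · exact (continuous_coe_real_ereal.comp_continuousOn hwc).upperSemicontinuousOn
  intro v hv hvh a K hK hKU hfr p hp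
  by_contra hlt
  push Not at hlt
  beta_reduce at hlt hfr
  rw [← EReal.coe_add, EReal.coe_lt_coe_iff] at hlt
  have hfr' : ∀ x ∈ frontier K, h (Fin.tail x) + v x ≤ a x := by
    intro x hx
    have := hfr x hx
    rwa [← EReal.coe_add, EReal.coe_le_coe_iff] at this
  -- a quadratically perturbed maximum
  have hsq : Continuous (fun y : Fin (n+1) → ℝ => y ⬝ᵥ y) :=
    Continuous.dotProduct continuous_id continuous_id
  obtain ⟨S, hS⟩ := (hK.image hsq).bddAbove
  have hS' : ∀ y ∈ K, y ⬝ᵥ y ≤ S := fun y hy => hS ⟨y, hy, rfl⟩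
  have hsq0 : ∀ y : Fin (n+1) → ℝ, 0 ≤ y ⬝ᵥ y := fun y =>
    Finset.sum_nonneg fun i _ => mul_self_nonneg _
  have hS0 : 0 ≤ S := (hsq0 p).trans (hS' p hp)
  set γ : ℝ := h (Fin.tail p) + v p - a p with hγ
  have hγ0 : 0 < γ := by rw [hγ]; linarith
  set ε : ℝ := γ / (2 * (S + 1)) with hεdef
  have hε : 0 < ε := by positivity
  have hεS : ε * S < γ := by
    rw [hεdef, div_mul_eq_mul_div, div_lt_iff₀ (by positivity)]
    nlinarith
  have hac : Continuous a := a.continuous_of_finiteDimensional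
  let g : (Fin (n+1) → ℝ) → ℝ := fun y => h (Fin.tail y) + v y - a y + ε * (y ⬝ᵥ y)
  have hgc : ContinuousOn g K :=
    (((hwc.mono hKU).add (hv.continuousOn.mono hKU)).sub hac.continuousOn).add
      (continuous_const.mul hsq).continuousOn
  obtain ⟨y₀, hy₀, hmax⟩ := hK.exists_isMaxOn ⟨p, hp⟩ hgc
  have hpy : g p ≤ g y₀ := hmax hp
  have hy₀int : y₀ ∈ interior K := by
    by_contra hni
    have hf : y₀ ∈ frontier K := ⟨subset_closure hy₀, hni⟩
    have h1 := hfr' y₀ hf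
    have h2 : ε * (y₀ ⬝ᵥ y₀) ≤ ε * S := mul_le_mul_of_nonneg_left (hS' y₀ hy₀) hε.le
    have h3 : 0 ≤ ε * (p ⬝ᵥ p) := mul_nonneg hε.le (hsq0 p)
    simp only [g] at hpy
    linarith
  have hy₀U : y₀ ∈ U := hKU hy₀
  obtain ⟨ρ₁, hρ₁, hball⟩ := Metric.isOpen_iff.1 isOpen_interior y₀ hy₀int
  obtain ⟨ρ₂, hρ₂, htay⟩ := cst_taylor v y₀ (hv.contDiffAt (hUopen.mem_nhds hy₀U)) (ε / 2)
    (by positivity)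
  obtain ⟨hsymm, hnot⟩ := hvh y₀ hy₀U
  apply hnot
  let Λ : (Fin (n+1) → ℝ) →ₗ[ℝ] ℝ :=
    { toFun := fun z => - fderiv ℝ v y₀ z + a.linear z - 2 * ε * (y₀ ⬝ᵥ z)
      map_add' := fun z w => by simp only [map_add, dotProduct_add]; ring
      map_smul' := fun t z => by
        simp only [map_smul, dotProduct_smul, smul_eq_mul, RingHom.id_apply]; ring }
  refine cst_core n c D hDopen h hhF (Fin.tail y₀) hy₀U.2 Λ _ hsymm.neg (ε / 2) (min ρ₁ ρ₂)
    (by positivity) (lt_min hρ₁ hρ₂) ?_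
  intro z hz
  have hzK : y₀ + z ∈ K := interior_subset (hball (by
    simpa [dist_eq_norm] using hz.trans_le (min_le_left _ _)))
  have h1 : g (y₀ + z) ≤ g y₀ := hmax hzK
  have h2 := (abs_le.1 (htay z (hz.trans_le (min_le_right _ _)))).1
  have h3 : a (y₀ + z) = a.linear z + a y₀ := by
    have := a.map_vadd y₀ z
    rwa [vadd_eq_add, vadd_eq_add, add_comm z] at this
  have h4 : (y₀ + z) ⬝ᵥ (y₀ + z) = y₀ ⬝ᵥ y₀ + 2 * (y₀ ⬝ᵥ z) + z ⬝ᵥ z := by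
    rw [add_dotProduct, dotProduct_add, dotProduct_add, dotProduct_comm z y₀]; ring
  have h5 : ‖z‖ ^ 2 ≤ z ⬝ᵥ z := by
    have h6 : ‖z‖ ≤ √(z ⬝ᵥ z) := by
      refine (pi_norm_le_iff_of_nonneg (Real.sqrt_nonneg _)).2 fun i => ?_
      refine Real.le_sqrt_of_sq_le ?_
      rw [Real.norm_eq_abs, sq_abs, sq]
      exact Finset.single_le_sum (f := fun i => z i * z i) (fun i _ => mul_self_nonneg _)
        (Finset.mem_univ i)
    calc ‖z‖ ^ 2 ≤ √(z ⬝ᵥ z) ^ 2 := by gcongr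
      _ = _ := Real.sq_sqrt (hsq0 z)
  have h7 : ε * ‖z‖ ^ 2 ≤ ε * (z ⬝ᵥ z) := mul_le_mul_of_nonneg_left h5 hε.le
  have h8 : Fin.tail (y₀ + z) = Fin.tail y₀ + Fin.tail z := rfl
  simp only [g] at h1
  rw [h3, h4, h8] at h1
  change _ ≤ h (Fin.tail y₀) + (- fderiv ℝ v y₀ z + a.linear z - 2 * ε * (y₀ ⬝ᵥ z)) + _ - _
  rw [Matrix.neg_mulVec, dotProduct_neg]
  linarith
end
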